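/- Let p ∈ [3/2, 9/4) and let (u, w, b, Π) be a smooth solution of the stationary magneto-micropolar equations on ℝ³ with u, b, w bounded on ℝ³. Then there exists a constant C > 0 (depending only on p and on ‖u‖_{L^∞}, ‖b‖_{L^∞}, ‖w‖_{L^∞}) such that for all R > 1: ∫_{B_R} (|∇u|² + |∇b|² + |∇w|²) dx ≤ C (R^{1 − 9/(2p)} + R^{2 − 9/(2p)}) (‖u‖_{L^p(B_{2R})} + ‖b‖_{L^p(B_{2R})} + ‖w‖_{L^p(B_{2R})})^{3/2}. -/

import Mathlib

open MeasureTheory Real Filter Metric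
open scoped Topology ENNReal

noncomputable section

/-- Three-dimensional Euclidean space. -/
abbrev E3 := EuclideanSpace ℝ (Fin 3)

/-- Partial derivative in the `i`-th coordinate direction. -/
def pd (i : Fin 3) (f : E3 → ℝ) (x : E3) : ℝ := fderiv ℝ f x (EuclideanSpace.single i 1)

/-- Laplacian of a scalar function. -/
def lap (f : E3 → ℝ) (x : E3) : ℝ := ∑ i, pd i (fun y => pd i f y) x

/-- Divergence of a vector field. -/
def vdiv (v : E3 → E3) (x : E3) : ℝ := ∑ i, pd i (fun y => v y i) x

/-- Curl of a vector field on ℝ³. -/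
def curl3 (v : E3 → E3) (x : E3) : Fin 3 → ℝ :=
  ![pd 1 (fun y => v y 2) x - pd 2 (fun y => v y 1) x,
    pd 2 (fun y => v y 0) x - pd 0 (fun y => v y 2) x,
    pd 0 (fun y => v y 1) x - pd 1 (fun y => v y 0) x]

/-- Squared norm of the full gradient of a vector field: |∇v|² = Σᵢⱼ (∂ᵢ vⱼ)². -/
def gradSq (v : E3 → E3) (x : E3) : ℝ := ∑ j, ∑ i, (pd i (fun y => v y j) x) ^ 2

/-- The open ball of radius `r` centered at the origin. -/
def ball3 (r : ℝ) : Set E3 := Metric.ball (0 : E3) r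

/-- `(u, w, b, Π)` is a smooth solution of the stationary magneto-micropolar equations on ℝ³
(with all physical constants set to 1):
−Δu + (u·∇)u + ∇Π = ∇×w + (b·∇)b; −Δw + (u·∇)w = ∇(div w) + ∇×u − 2w;
−Δb + (u·∇)b = (b·∇)u; div u = 0, div b = 0. -/
structure IsMMPSolution (u w b : E3 → E3) (P : E3 → ℝ) : Prop where
  smooth_u : ContDiff ℝ (⊤ : ℕ∞) u
  smooth_w : ContDiff ℝ (⊤ : ℕ∞) w
  smooth_b : ContDiff ℝ (⊤ : ℕ∞) b
  smooth_P : ContDiff ℝ (⊤ : ℕ∞) P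
  eq_u : ∀ x : E3, ∀ j : Fin 3,
    -(lap (fun y => u y j) x) + (∑ i, u x i * pd i (fun y => u y j) x) + pd j P x
      = curl3 w x j + ∑ i, b x i * pd i (fun y => b y j) x
  eq_w : ∀ x : E3, ∀ j : Fin 3,
    -(lap (fun y => w y j) x) + (∑ i, u x i * pd i (fun y => w y j) x)
      = pd j (fun y => vdiv w y) x + curl3 u x j - 2 * w x j
  eq_b : ∀ x : E3, ∀ j : Fin 3,
    -(lap (fun y => b y j) x) + (∑ i, u x i * pd i (fun y => b y j) x)
      = ∑ i, b x i * pd i (fun y => u y j) x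
  div_u : ∀ x : E3, vdiv u x = 0
  div_b : ∀ x : E3, vdiv b x = 0

/-- The `Lᵖ` norm of a vector field over a set `S` (for `p` a positive real). -/
def lpnorm (p : ℝ) (v : E3 → E3) (S : Set E3) : ℝ := (∫ x in S, ‖v x‖ ^ p) ^ (1 / p)

/-- Smooth scalar functions vanishing outside the closed ball of radius `r`. -/
structure TF (r : ℝ) (f : E3 → ℝ) : Prop where
  smooth : ContDiff ℝ (⊤ : ℕ∞) f
  zero : ∀ x, r < ‖x‖ → f x = 0

lemma ContDiff.pd {f : E3 → ℝ} (hf : ContDiff ℝ (⊤ : ℕ∞) f) (i : Fin 3) :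
    ContDiff ℝ (⊤ : ℕ∞) (fun x => pd i f x) := by
  unfold _root_.pd
  exact (hf.fderiv_right (m := (⊤ : ℕ∞)) (by simp)).clm_apply contDiff_const

lemma ContDiff.comp_coord {v : E3 → E3} (hv : ContDiff ℝ (⊤ : ℕ∞) v) (j : Fin 3) :
    ContDiff ℝ (⊤ : ℕ∞) (fun x => v x j) := by
  fun_prop

lemma ContDiff.diffAt {f : E3 → ℝ} (hf : ContDiff ℝ (⊤ : ℕ∞) f) (x : E3) :
    DifferentiableAt ℝ f x := (hf.differentiable (by simp)) x

lemma pd_add {f g : E3 → ℝ} (hf : ContDiff ℝ (⊤ : ℕ∞) f) (hg : ContDiff ℝ (⊤ : ℕ∞) g)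
    (i : Fin 3) (x : E3) : pd i (fun y => f y + g y) x = pd i f x + pd i g x := by
  unfold pd
  rw [fderiv_fun_add (hf.diffAt x) (hg.diffAt x)]; rfl

lemma pd_sub {f g : E3 → ℝ} (hf : ContDiff ℝ (⊤ : ℕ∞) f) (hg : ContDiff ℝ (⊤ : ℕ∞) g)
    (i : Fin 3) (x : E3) : pd i (fun y => f y - g y) x = pd i f x - pd i g x := by
  unfold pd
  rw [fderiv_fun_sub (hf.diffAt x) (hg.diffAt x)]; rfl

lemma pd_mul {f g : E3 → ℝ} (hf : ContDiff ℝ (⊤ : ℕ∞) f) (hg : ContDiff ℝ (⊤ : ℕ∞) g)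
    (i : Fin 3) (x : E3) :
    pd i (fun y => f y * g y) x = pd i f x * g x + f x * pd i g x := by
  unfold pd
  rw [fderiv_fun_mul (hf.diffAt x) (hg.diffAt x)]
  simp only [add_apply, smul_apply, smul_eq_mul]
  ring

lemma pd_const_mul {f : E3 → ℝ} (hf : ContDiff ℝ (⊤ : ℕ∞) f) (c : ℝ)
    (i : Fin 3) (x : E3) : pd i (fun y => c * f y) x = c * pd i f x := by
  unfold pd
  rw [fderiv_const_mul (hf.diffAt x)]; rfl

lemma pd_neg (f : E3 → ℝ) (i : Fin 3) (x : E3) : pd i (fun y => - f y) x = - pd i f x := by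
  unfold pd
  rw [fderiv_fun_neg]; rfl

lemma pd_sum {ι : Type*} (s : Finset ι) {f : ι → E3 → ℝ}
    (hf : ∀ k, ContDiff ℝ (⊤ : ℕ∞) (f k)) (i : Fin 3) (x : E3) :
    pd i (fun y => ∑ k ∈ s, f k y) x = ∑ k ∈ s, pd i (f k) x := by
  unfold pd
  rw [fderiv_fun_sum (fun k _ => (hf k).diffAt x)]
  simp

lemma pd_comm {f : E3 → ℝ} (hf : ContDiff ℝ (⊤ : ℕ∞) f) (i j : Fin 3) (x : E3) :
    pd i (fun y => pd j f y) x = pd j (fun y => pd i f y) x := by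
  have key : ∀ v w : E3, fderiv ℝ (fun y => fderiv ℝ f y v) x w
      = fderiv ℝ (fderiv ℝ f) x w v := by
    intro v w
    have hd : DifferentiableAt ℝ (fderiv ℝ f) x :=
      ((hf.fderiv_right (m := (⊤ : ℕ∞)) (by simp)).differentiable (by simp)) x
    rw [fderiv_clm_apply hd (by fun_prop)]
    simp
  unfold pd
  rw [key, key]
  have h2 : minSmoothness ℝ 2 ≤ ((⊤ : ℕ∞) : WithTop ℕ∞) := by
    rw [minSmoothness_of_isRCLikeNormedField]
    exact WithTop.coe_le_coe.2 (le_top : (2 : ℕ∞) ≤ ⊤)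
  exact (hf.contDiffAt.isSymmSndFDerivAt h2).eq _ _

lemma pd_comp_smul {f : E3 → ℝ} (hf : ContDiff ℝ (⊤ : ℕ∞) f) (a : ℝ) (i : Fin 3) (x : E3) :
    pd i (fun y => f (a • y)) x = a * pd i f (a • x) := by
  unfold pd
  have h : HasFDerivAt (fun y : E3 => a • y) (a • ContinuousLinearMap.id ℝ E3) x :=
    (hasFDerivAt_id x).const_smul a
  have := ((hf.diffAt (a • x)).hasFDerivAt.comp x h).fderiv
  rw [show (fun y => f (a • y)) = f ∘ (fun y => a • y) from rfl, this]
  simp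

lemma pd_zero_of_norm_gt {f : E3 → ℝ} {r : ℝ} (hf : ∀ x, r < ‖x‖ → f x = 0) (i : Fin 3)
    (x : E3) (hx : r < ‖x‖) : pd i f x = 0 := by
  have : f =ᶠ[𝓝 x] fun _ => 0 := by
    filter_upwards [(isOpen_lt continuous_const continuous_norm).mem_nhds hx] with y hy
    exact hf y hy
  unfold pd
  rw [this.fderiv_eq]; simp

namespace TF

variable {r : ℝ} {f g : E3 → ℝ}

lemma pd (hf : TF r f) (i : Fin 3) : TF r (fun x => pd i f x) :=
  ⟨hf.smooth.pd i, fun x hx => pd_zero_of_norm_gt hf.zero i x hx⟩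

lemma mono {r' : ℝ} (hf : TF r f) (h : r ≤ r') : TF r' f :=
  ⟨hf.smooth, fun x hx => hf.zero x (h.trans_lt hx)⟩

lemma sub (hf : TF r f) (hg : TF r g) : TF r (fun x => f x - g x) :=
  ⟨hf.smooth.sub hg.smooth, fun x hx => by simp [hf.zero x hx, hg.zero x hx]⟩

lemma mul_left (hf : TF r f) (hg : ContDiff ℝ (⊤ : ℕ∞) g) : TF r (fun x => g x * f x) :=
  ⟨hg.mul hf.smooth, fun x hx => by simp [hf.zero x hx]⟩

lemma mul_right (hf : TF r f) (hg : ContDiff ℝ (⊤ : ℕ∞) g) : TF r (fun x => f x * g x) :=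
  ⟨hf.smooth.mul hg, fun x hx => by simp [hf.zero x hx]⟩

lemma const_mul (hf : TF r f) (c : ℝ) : TF r (fun x => c * f x) := hf.mul_left contDiff_const

lemma sum {ι : Type*} (s : Finset ι) {F : ι → E3 → ℝ} (hF : ∀ k, TF r (F k)) :
    TF r (fun x => ∑ k ∈ s, F k x) :=
  ⟨ContDiff.sum fun k _ => (hF k).smooth,
    fun x hx => Finset.sum_eq_zero fun k _ => (hF k).zero x hx⟩

lemma lap (hf : TF r f) : TF r (fun x => lap f x) := TF.sum _ fun i => (hf.pd i).pd i

lemma hasCompactSupport (hf : TF r f) : HasCompactSupport f :=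
  HasCompactSupport.intro (isCompact_closedBall (0 : E3) r) fun x hx =>
    hf.zero x (by simpa using hx)

lemma integrable (hf : TF r f) : Integrable f :=
  hf.smooth.continuous.integrable_of_hasCompactSupport hf.hasCompactSupport

lemma integrable_mul (hf : TF r f) (hg : Continuous g) : Integrable (fun x => g x * f x) :=
  (hg.mul hf.smooth.continuous).integrable_of_hasCompactSupport hf.hasCompactSupport.mul_left

lemma exists_bound (hf : TF r f) : ∃ C, 0 ≤ C ∧ ∀ x, |f x| ≤ C := by
  obtain ⟨C, hC⟩ := hf.hasCompactSupport.exists_bound_of_continuous hf.smooth.continuous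
  exact ⟨C, (norm_nonneg _).trans (hC 0), hC⟩

end TF

lemma ContDiff.lap {f : E3 → ℝ} (hf : ContDiff ℝ (⊤ : ℕ∞) f) :
    ContDiff ℝ (⊤ : ℕ∞) (fun x => lap f x) := ContDiff.sum fun i _ => (hf.pd i).pd i

lemma lap_pd {f : E3 → ℝ} (hf : ContDiff ℝ (⊤ : ℕ∞) f) (i : Fin 3) (x : E3) :
    lap (fun y => pd i f y) x = pd i (fun y => lap f y) x := by
  unfold lap
  rw [pd_sum _ (fun k => (hf.pd k).pd k)]
  refine Finset.sum_congr rfl fun k _ => ?_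
  rw [show (fun y => pd k (fun y => pd i f y) y) = fun y => pd i (fun y => pd k f y) y from
    funext fun y => pd_comm hf k i y]
  exact pd_comm (hf.pd k) k i x

lemma lap_add {f g : E3 → ℝ} (hf : ContDiff ℝ (⊤ : ℕ∞) f) (hg : ContDiff ℝ (⊤ : ℕ∞) g)
    (x : E3) : lap (fun y => f y + g y) x = lap f x + lap g x := by
  unfold lap
  rw [← Finset.sum_add_distrib]
  refine Finset.sum_congr rfl fun k _ => ?_
  rw [show (fun y => pd k (fun y => f y + g y) y) = fun y => pd k f y + pd k g y from
    funext fun y => pd_add hf hg k y]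
  exact pd_add (hf.pd k) (hg.pd k) k x

lemma lap_const_mul {f : E3 → ℝ} (hf : ContDiff ℝ (⊤ : ℕ∞) f) (c : ℝ)
    (x : E3) : lap (fun y => c * f y) x = c * lap f x := by
  unfold lap
  rw [Finset.mul_sum]
  refine Finset.sum_congr rfl fun k _ => ?_
  rw [show (fun y => pd k (fun y => c * f y) y) = fun y => c * pd k f y from
    funext fun y => pd_const_mul hf c k y]
  exact pd_const_mul (hf.pd k) c k x

lemma lap_sub {f g : E3 → ℝ} (hf : ContDiff ℝ (⊤ : ℕ∞) f) (hg : ContDiff ℝ (⊤ : ℕ∞) g)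
    (x : E3) : lap (fun y => f y - g y) x = lap f x - lap g x := by
  have := lap_add hf (contDiff_const.mul hg : ContDiff ℝ (⊤ : ℕ∞) fun y => (-1) * g y) x
  rw [lap_const_mul hg] at this
  simpa [sub_eq_add_neg] using this

lemma pd_pd_comp_smul {f : E3 → ℝ} (hf : ContDiff ℝ (⊤ : ℕ∞) f) (a : ℝ) (i j : Fin 3) (x : E3) :
    pd i (fun y => pd j (fun z => f (a • z)) y) x
      = a ^ 2 * pd i (fun y => pd j f y) (a • x) := by
  rw [show (fun y => pd j (fun z => f (a • z)) y) = fun y => a * pd j f (a • y) from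
    funext fun y => pd_comp_smul hf a j y]
  rw [pd_const_mul (f := fun y => pd j f (a • y)) ((hf.pd j).comp (contDiff_const_smul a)),
    pd_comp_smul (hf.pd j)]
  ring

lemma lap_comp_smul {f : E3 → ℝ} (hf : ContDiff ℝ (⊤ : ℕ∞) f) (a : ℝ) (x : E3) :
    lap (fun y => f (a • y)) x = a ^ 2 * lap f (a • x) := by
  unfold lap
  rw [Finset.mul_sum]
  exact Finset.sum_congr rfl fun k _ => pd_pd_comp_smul hf a k k x

/-- Integration by parts against a compactly supported smooth function. -/
lemma integral_pd_mul {r : ℝ} {f h : E3 → ℝ} (hf : ContDiff ℝ (⊤ : ℕ∞) f) (hh : TF r h)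
    (i : Fin 3) : ∫ x, pd i f x * h x = - ∫ x, f x * pd i h x := by
  have := integral_mul_fderiv_eq_neg_fderiv_mul_of_integrable (μ := (volume : Measure E3))
    (f := f) (g := h) (v := EuclideanSpace.single i 1)
    (hh.integrable_mul (hf.pd i).continuous) ((hh.pd i).integrable_mul hf.continuous)
    (hh.integrable_mul hf.continuous) (fun x _ => hf.diffAt x)
    (fun x _ => hh.smooth.diffAt x)
  unfold pd
  rw [this, neg_neg]

lemma integral_lap_mul {r : ℝ} {f h : E3 → ℝ} (hf : ContDiff ℝ (⊤ : ℕ∞) f) (hh : TF r h) :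
    ∫ x, lap f x * h x = ∫ x, f x * lap h x := by
  unfold lap
  simp_rw [Finset.sum_mul, Finset.mul_sum]
  rw [integral_finsetSum _ fun i _ => hh.integrable_mul ((hf.pd i).pd i).continuous,
    integral_finsetSum _ fun i _ => ((hh.pd i).pd i).integrable_mul hf.continuous]
  refine Finset.sum_congr rfl fun i _ => ?_
  rw [integral_pd_mul (hf.pd i) hh, integral_pd_mul hf (hh.pd i), neg_neg]

/-- A smooth function on the line which agrees with `t ↦ t ^ (-1/2)` for `t ≥ 1` and vanishes for
`t ≤ 1/2`. -/
def newtonProfile (t : ℝ) : ℝ := smoothTransition (2 * t - 1) * (√t)⁻¹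

lemma newtonProfile_smooth : ContDiff ℝ (⊤ : ℕ∞) newtonProfile := by
  rw [contDiff_iff_contDiffAt]
  intro t
  rcases lt_or_ge t (1 / 2) with ht | ht
  · have : newtonProfile =ᶠ[𝓝 t] fun _ => 0 := by
      filter_upwards [Iio_mem_nhds ht] with s hs
      have hs : s < 1 / 2 := hs
      simp only [newtonProfile]
      rw [smoothTransition.zero_of_nonpos (by linarith), zero_mul]
    exact contDiffAt_const.congr_of_eventuallyEq this
  · have h0 : t ≠ 0 := by linarith
    unfold newtonProfile
    refine ContDiffAt.mul ?_ ?_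
    · exact smoothTransition.contDiff.contDiffAt.comp t (by fun_prop)
    · exact (contDiffAt_id.sqrt h0).inv (Real.sqrt_ne_zero'.2 (show (0 : ℝ) < t by linarith))

lemma newtonProfile_sq {r : ℝ} (hr : 1 ≤ r) : newtonProfile (r ^ 2) = r⁻¹ := by
  unfold newtonProfile
  rw [smoothTransition.one_of_one_le (by nlinarith), Real.sqrt_sq (by linarith), one_mul]

/-- The difference between the Newton kernel and its smoothing, as a function of the radius. -/
def radialKernel (r : ℝ) : ℝ := r⁻¹ - newtonProfile (r ^ 2)

/-- The difference between the Newton kernel and its smoothing. -/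
def newtonKernel (x : E3) : ℝ := radialKernel ‖x‖

/-- The smoothed Newton kernel. -/
def smoothNewton (x : E3) : ℝ := newtonProfile (‖x‖ ^ 2)

/-- The Laplacian of the smoothed Newton kernel, as a function of the radius. -/
def radialLap (r : ℝ) : ℝ :=
  6 * deriv newtonProfile (r ^ 2) + 4 * r ^ 2 * deriv (deriv newtonProfile) (r ^ 2)

lemma newtonKernel_zero (x : E3) (hx : 1 < ‖x‖) : newtonKernel x = 0 := by
  unfold newtonKernel radialKernel
  rw [newtonProfile_sq hx.le, sub_self]

lemma finrank_E3 : Module.finrank ℝ E3 = 3 := by simp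

lemma integrable_newtonKernel : Integrable newtonKernel := by
  have := (integrable_fun_norm_addHaar (volume : Measure E3) (f := radialKernel)).2
  refine this ?_
  rw [finrank_E3]
  have h1 : IntegrableOn (fun y : ℝ => y - y ^ 2 * newtonProfile (y ^ 2)) (Set.Ioc 0 1) := by
    refine ((Continuous.integrableOn_Icc ?_).mono_set Set.Ioc_subset_Icc_self)
    exact continuous_id.sub ((continuous_pow 2).mul
      (newtonProfile_smooth.continuous.comp (continuous_pow 2)))
  rw [← Set.Ioc_union_Ioi_eq_Ioi (zero_le_one : (0 : ℝ) ≤ 1)]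
  refine IntegrableOn.union ?_ ?_
  · refine h1.congr_fun (fun y hy => ?_) measurableSet_Ioc
    have : y ≠ 0 := hy.1.ne'
    simp only [radialKernel, smul_eq_mul, Nat.add_one_sub_one]
    field_simp
  · refine (integrableOn_zero (μ := volume)).congr_fun (fun y hy => ?_) measurableSet_Ioi
    have hy : 1 < y := hy
    simp [radialKernel, newtonProfile_sq hy.le]

lemma smoothNewton_smooth : ContDiff ℝ (⊤ : ℕ∞) smoothNewton :=
  newtonProfile_smooth.comp (contDiff_norm_sq ℝ)

lemma pd_coord (i j : Fin 3) (x : E3) : pd i (fun y => y j) x = if i = j then 1 else 0 := by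
  unfold pd
  have : HasFDerivAt (fun y : E3 => y j) (EuclideanSpace.proj j : E3 →L[ℝ] ℝ) x :=
    (EuclideanSpace.proj j : E3 →L[ℝ] ℝ).hasFDerivAt
  rw [this.fderiv]
  simp [eq_comm]

lemma pd_comp_norm_sq {F : ℝ → ℝ} (hF : ContDiff ℝ (⊤ : ℕ∞) F) (i : Fin 3) (x : E3) :
    pd i (fun y => F (‖y‖ ^ 2)) x = 2 * (x i * deriv F (‖x‖ ^ 2)) := by
  unfold pd
  have h1 : HasFDerivAt (fun y : E3 => ‖y‖ ^ 2) (2 • (innerSL ℝ x)) x :=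
    (hasStrictFDerivAt_norm_sq x).hasFDerivAt
  have h2 : HasDerivAt F (deriv F (‖x‖ ^ 2)) (‖x‖ ^ 2) :=
    ((hF.differentiable (by simp)) _).hasDerivAt
  have := (h2.comp_hasFDerivAt x h1).fderiv
  rw [show (fun y : E3 => F (‖y‖ ^ 2)) = F ∘ fun y => ‖y‖ ^ 2 from rfl, this]
  simp [EuclideanSpace.inner_single_right]
  ring

lemma lap_smoothNewton (x : E3) : lap smoothNewton x = radialLap ‖x‖ := by
  have hd : ContDiff ℝ (⊤ : ℕ∞) (deriv newtonProfile) :=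
    (contDiff_infty_iff_deriv.1 newtonProfile_smooth).2
  have hG : ContDiff ℝ (⊤ : ℕ∞) fun y : E3 => deriv newtonProfile (‖y‖ ^ 2) :=
    hd.comp (contDiff_norm_sq ℝ)
  have hc : ∀ i : Fin 3, ContDiff ℝ (⊤ : ℕ∞) fun y : E3 => y i := fun i => by fun_prop
  unfold lap
  have : ∀ i : Fin 3, pd i (fun y => pd i smoothNewton y) x
      = 2 * deriv newtonProfile (‖x‖ ^ 2)
        + 4 * (x i) ^ 2 * deriv (deriv newtonProfile) (‖x‖ ^ 2) := by
    intro i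
    rw [show (fun y => pd i smoothNewton y)
      = fun y => 2 * (y i * deriv newtonProfile (‖y‖ ^ 2)) from
        funext fun y => pd_comp_norm_sq newtonProfile_smooth i y]
    rw [pd_const_mul ((hc i).mul hG), pd_mul (hc i) hG, pd_coord, pd_comp_norm_sq hd]
    simp
    ring
  simp_rw [this]
  have hn : ‖x‖ ^ 2 = x 0 ^ 2 + x 1 ^ 2 + x 2 ^ 2 := by
    rw [EuclideanSpace.norm_sq_eq]; simp [Fin.sum_univ_three]
  unfold radialLap
  rw [Fin.sum_univ_three, show 4 * ‖x‖ ^ 2 = 4 * (x 0 ^ 2 + x 1 ^ 2 + x 2 ^ 2) by rw [hn]]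
  ring

lemma hasDerivAt_flux (r : ℝ) :
    HasDerivAt (fun r => 2 * r ^ 3 * deriv newtonProfile (r ^ 2)) (r ^ 2 * radialLap r) r := by
  have hd : ContDiff ℝ (⊤ : ℕ∞) (deriv newtonProfile) :=
    (contDiff_infty_iff_deriv.1 newtonProfile_smooth).2
  have h2 : HasDerivAt (deriv newtonProfile) (deriv (deriv newtonProfile) (r ^ 2)) (r ^ 2) :=
    ((hd.differentiable (by simp)) _).hasDerivAt
  have h3 := HasDerivAt.comp (h := fun x : ℝ => x ^ 2) r h2 (hasDerivAt_pow 2 r)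
  have h4 := ((hasDerivAt_pow 3 r).const_mul 2).mul h3
  refine h4.congr_deriv ?_
  simp [radialLap]
  ring

lemma flux_eq {r : ℝ} (hr : 1 < r) : 2 * r ^ 3 * deriv newtonProfile (r ^ 2) = -1 := by
  have h2 : HasDerivAt newtonProfile (deriv newtonProfile (r ^ 2)) (r ^ 2) :=
    ((newtonProfile_smooth.differentiable (by simp)) _).hasDerivAt
  have h3 := HasDerivAt.comp (h := fun x : ℝ => x ^ 2) r h2 (hasDerivAt_pow 2 r)
  have h4 : HasDerivAt (newtonProfile ∘ fun x => x ^ 2) (-(r ^ 2)⁻¹) r := by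
    refine (hasDerivAt_inv (by linarith)).congr_of_eventuallyEq ?_
    filter_upwards [Ioi_mem_nhds hr] with s hs
    exact newtonProfile_sq (le_of_lt hs)
  have h5 := h3.unique h4
  have hr0 : r ≠ 0 := by linarith
  simp at h5
  calc 2 * r ^ 3 * deriv newtonProfile (r ^ 2)
      = r ^ 2 * (deriv newtonProfile (r ^ 2) * (2 * r)) := by ring
    _ = -1 := by rw [h5]; field_simp

lemma radialLap_zero {r : ℝ} (hr : 1 < r) : radialLap r = 0 := by
  have h1 : HasDerivAt (fun r => 2 * r ^ 3 * deriv newtonProfile (r ^ 2)) 0 r := by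
    refine (hasDerivAt_const r (-1 : ℝ)).congr_of_eventuallyEq ?_
    filter_upwards [Ioi_mem_nhds hr] with s hs
    exact flux_eq hs
  have := (hasDerivAt_flux r).unique h1
  have hr0 : r ≠ 0 := by linarith
  simpa [hr0] using this

lemma TF_lap_smoothNewton : TF 1 (fun x => lap smoothNewton x) :=
  ⟨smoothNewton_smooth.lap, fun x hx => by rw [lap_smoothNewton, radialLap_zero hx]⟩

lemma integral_lap_smoothNewton_ne_zero : ∫ x, lap smoothNewton x ≠ 0 := by
  simp_rw [lap_smoothNewton]
  have hi : Integrable (fun x : E3 => radialLap ‖x‖) := by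
    simpa only [lap_smoothNewton] using TF_lap_smoothNewton.integrable
  rw [integrable_fun_norm_addHaar (volume : Measure E3) (f := radialLap), finrank_E3] at hi
  rw [integral_fun_norm_addHaar (volume : Measure E3) radialLap, finrank_E3]
  have : ∫ y in Set.Ioi (0 : ℝ), y ^ (3 - 1) • radialLap y = -1 := by
    have h := integral_Ioi_of_hasDerivAt_of_tendsto' (a := (0 : ℝ)) (m := (-1 : ℝ))
      (fun x _ => hasDerivAt_flux x) hi ?_
    · rw [show (fun y : ℝ => y ^ (3 - 1) • radialLap y) = fun y => y ^ 2 * radialLap y from rfl, h]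
      simp
    · refine tendsto_const_nhds.congr' ?_
      filter_upwards [eventually_gt_atTop 1] with r hr
      exact (flux_eq hr).symm
  rw [this]
  have hb : 0 < (volume : Measure E3).real (ball 0 1) :=
    ENNReal.toReal_pos (measure_ball_pos _ _ one_pos).ne' measure_ball_lt_top.ne
  simp [hb.ne']

lemma TF.comp_smul {r a : ℝ} {f : E3 → ℝ} (hf : TF r f) (ha : 0 < a) :
    TF (r / a) (fun x => f (a • x)) := by
  refine ⟨hf.smooth.comp (contDiff_const_smul a), fun x hx => hf.zero _ ?_⟩
  rw [norm_smul, Real.norm_of_nonneg ha.le, mul_comm]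
  rwa [div_lt_iff₀ ha] at hx

lemma integral_comp_smul_E3 (f : E3 → ℝ) {a : ℝ} (ha : 0 < a) :
    ∫ x, f x = a ^ 3 * ∫ x, f (a • x) := by
  rw [Measure.integral_comp_smul_of_nonneg volume f a (hR := ha.le), finrank_E3, smul_eq_mul]
  field_simp

lemma tendsto_integral_dilate {r s : ℝ} {g h : E3 → ℝ} (hg : TF r g) (hh : TF s h) :
    Tendsto (fun e : ℝ => ∫ y, g y * h (e • y)) (𝓝[>] 0) (𝓝 (∫ y, g y * h 0)) := by
  obtain ⟨C, hC0, hC⟩ := hh.exists_bound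
  refine tendsto_integral_filter_of_dominated_convergence (fun y => C * |g y|) ?_ ?_ ?_ ?_
  · refine Eventually.of_forall fun e => Continuous.aestronglyMeasurable ?_
    exact hg.smooth.continuous.mul (hh.smooth.continuous.comp (continuous_const_smul e))
  · refine Eventually.of_forall fun e => Eventually.of_forall fun y => ?_
    rw [Real.norm_eq_abs, abs_mul, mul_comm]
    exact mul_le_mul_of_nonneg_right (hC _) (abs_nonneg _)
  · exact (hg.integrable.abs).const_mul C
  · refine Eventually.of_forall fun y => ?_
    have : Continuous fun e : ℝ => g y * h (e • y) :=
      continuous_const.mul (hh.smooth.continuous.comp (continuous_id.smul continuous_const))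
    have := this.tendsto 0
    simp only [zero_smul] at this
    exact this.mono_left nhdsWithin_le_nhds

/-- The distributional Laplacian of `newtonKernel`. -/
lemma integral_newtonKernel_mul_lap {r : ℝ} {h : E3 → ℝ} (hh : TF r h) :
    ∫ y, newtonKernel y * lap h y
      = (∫ y, lap smoothNewton y) * h 0 - ∫ y, lap smoothNewton y * h y := by
  obtain ⟨C, hC0, hC⟩ := hh.lap.exists_bound
  have hk := integrable_newtonKernel
  have hkm : ∀ e : ℝ, Integrable fun y => newtonKernel y * lap h (e • y) := fun e =>
    hk.mul_bdd (c := C)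
      (hh.lap.smooth.continuous.comp (continuous_const_smul e)).aestronglyMeasurable
      (Eventually.of_forall fun y => hC _)
  have key : ∀ e : ℝ, 0 < e → ∫ y, newtonKernel y * lap h y
      = e ^ 2 * (∫ y, newtonKernel y * lap h (e • y))
        + (∫ y, lap smoothNewton y * h (e • y)) - ∫ y, lap smoothNewton y * h y := by
    intro e he
    have hei : 0 < e⁻¹ := inv_pos.2 he
    have hs : ContDiff ℝ (⊤ : ℕ∞) fun y => smoothNewton (e⁻¹ • y) :=
      smoothNewton_smooth.comp (contDiff_const_smul _)
    have hpt : ∀ᵐ y : E3, newtonKernel y * lap h y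
        = e⁻¹ * (newtonKernel (e⁻¹ • y) * lap h y)
          + (e⁻¹ * smoothNewton (e⁻¹ • y) - smoothNewton y) * lap h y := by
      filter_upwards with y
      simp only [newtonKernel, radialKernel, smoothNewton, norm_smul, norm_inv,
        Real.norm_of_nonneg he.le, mul_inv, inv_inv]
      field_simp
      ring
    have hI1 : Integrable fun y => e⁻¹ * (newtonKernel (e⁻¹ • y) * lap h y) := by
      refine Integrable.const_mul ?_ _
      have := (hkm e).comp_smul hei.ne'
      simpa [smul_smul, he.ne'] using this
    have hI2 : Integrable fun y =>
        (e⁻¹ * smoothNewton (e⁻¹ • y) - smoothNewton y) * lap h y :=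
      hh.lap.integrable_mul
        ((continuous_const.mul hs.continuous).sub smoothNewton_smooth.continuous)
    rw [integral_congr_ae hpt, integral_add hI1 hI2]
    have h1 : ∫ y, e⁻¹ * (newtonKernel (e⁻¹ • y) * lap h y)
        = e ^ 2 * ∫ y, newtonKernel y * lap h (e • y) := by
      rw [integral_const_mul, integral_comp_smul_E3 _ he]
      simp only [smul_smul, inv_mul_cancel₀ he.ne', one_smul]
      field_simp
    have h2 : ∫ y, (e⁻¹ * smoothNewton (e⁻¹ • y) - smoothNewton y) * lap h y
        = (∫ y, lap smoothNewton y * h (e • y)) - ∫ y, lap smoothNewton y * h y := by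
      have hcs : ContDiff ℝ (⊤ : ℕ∞) fun y => e⁻¹ * smoothNewton (e⁻¹ • y) :=
        contDiff_const.mul hs
      rw [← integral_lap_mul (hcs.sub smoothNewton_smooth) hh]
      simp_rw [lap_sub hcs smoothNewton_smooth, lap_const_mul hs, lap_comp_smul smoothNewton_smooth,
        sub_mul]
      rw [integral_sub]
      · congr 1
        rw [integral_comp_smul_E3 _ he, ← integral_const_mul]
        refine integral_congr_ae (Eventually.of_forall fun y => ?_)
        simp only [smul_smul, inv_mul_cancel₀ he.ne', one_smul]
        field_simp
      · refine hh.integrable_mul (continuous_const.mul (continuous_const.mul ?_))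
        exact smoothNewton_smooth.lap.continuous.comp (continuous_const_smul _)
      · exact hh.integrable_mul smoothNewton_smooth.lap.continuous
    rw [h1, h2]
    ring
  have hlim1 : Tendsto (fun e : ℝ => e ^ 2 * (∫ y, newtonKernel y * lap h (e • y)))
      (𝓝[>] 0) (𝓝 0) := by
    have hb : ∀ e : ℝ, ‖∫ y, newtonKernel y * lap h (e • y)‖ ≤ C * ∫ y, |newtonKernel y| := by
      intro e
      rw [← integral_const_mul]
      refine norm_integral_le_of_norm_le (hk.abs.const_mul C) (Eventually.of_forall fun y => ?_)
      rw [Real.norm_eq_abs, abs_mul, mul_comm]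
      exact mul_le_mul_of_nonneg_right (hC _) (abs_nonneg _)
    have h0 : Tendsto (fun e : ℝ => e ^ 2 * (C * ∫ y, |newtonKernel y|)) (𝓝[>] 0) (𝓝 0) := by
      have : Continuous fun e : ℝ => e ^ 2 * (C * ∫ y, |newtonKernel y|) := by fun_prop
      have := this.tendsto 0
      simp only [ne_eq, OfNat.ofNat_ne_zero, not_false_eq_true, zero_pow, zero_mul] at this
      exact this.mono_left nhdsWithin_le_nhds
    refine squeeze_zero_norm (fun e => ?_) h0
    rw [norm_mul, norm_pow, Real.norm_eq_abs, sq_abs]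
    exact mul_le_mul_of_nonneg_left (hb e) (sq_nonneg _)
  have hlim := (hlim1.add (tendsto_integral_dilate TF_lap_smoothNewton hh)).sub_const
    (∫ y, lap smoothNewton y * h y)
  have hconst : Tendsto (fun _ : ℝ => ∫ y, newtonKernel y * lap h y) (𝓝[>] 0)
      (𝓝 (∫ y, newtonKernel y * lap h y)) := tendsto_const_nhds
  have := tendsto_nhds_unique (hconst.congr' (by
    filter_upwards [self_mem_nhdsWithin] with e he
    exact key e he)) hlim
  rw [this, zero_add, integral_mul_const]

/-- Convolution of scalar functions on `E3`. -/
def conv (k Y : E3 → ℝ) (x : E3) : ℝ := ∫ t, k t * Y (x - t)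

section conv

variable {k Y : E3 → ℝ} {r : ℝ}

lemma conv_smooth (hk : Integrable k) (hY : TF r Y) : ContDiff ℝ (⊤ : ℕ∞) (conv k Y) :=
  hY.hasCompactSupport.contDiff_convolution_right (ContinuousLinearMap.mul ℝ ℝ)
    hk.locallyIntegrable hY.smooth

lemma pd_conv (hk : Integrable k) (hY : TF r Y) (i : Fin 3) (x : E3) :
    pd i (conv k Y) x = conv k (fun y => pd i Y y) x := by
  have h := (hY.hasCompactSupport.hasFDerivAt_convolution_right (ContinuousLinearMap.mul ℝ ℝ)
    hk.locallyIntegrable (hY.smooth.of_le (WithTop.coe_le_coe.2 (le_top : (1 : ℕ∞) ≤ ⊤))) x)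
  have h2 := h.fderiv
  unfold pd
  rw [show conv k Y = convolution k Y (ContinuousLinearMap.mul ℝ ℝ) volume from rfl, h2,
    convolution_precompR_apply _ hk.locallyIntegrable (hY.hasCompactSupport.fderiv ℝ)
      (hY.smooth.continuous_fderiv (by simp))]
  rfl

lemma conv_zero {s : ℝ} (hk : ∀ x, s < ‖x‖ → k x = 0) (hY : TF r Y) (x : E3)
    (hx : r + s < ‖x‖) : conv k Y x = 0 := by
  unfold conv
  rw [← integral_zero E3 ℝ (μ := volume)]
  congr 1
  ext t
  rcases lt_or_ge s ‖t‖ with h | h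
  · rw [hk t h, zero_mul]
  · rw [hY.zero, mul_zero]
    have := norm_le_norm_sub_add x t
    linarith

lemma TF_conv {s : ℝ} (hk : Integrable k) (hk0 : ∀ x, s < ‖x‖ → k x = 0) (hY : TF r Y) :
    TF (r + s) (conv k Y) := ⟨conv_smooth hk hY, conv_zero hk0 hY⟩

lemma TF.reflect (hY : TF r Y) (x : E3) : TF (‖x‖ + r) (fun t => Y (x - t)) := by
  refine ⟨hY.smooth.comp (contDiff_const.sub contDiff_id), fun t ht => hY.zero _ ?_⟩
  have := norm_sub_norm_le t x
  rw [norm_sub_rev] at this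
  linarith

lemma pd_reflect (hY : ContDiff ℝ (⊤ : ℕ∞) Y) (x : E3) (i : Fin 3) (t : E3) :
    pd i (fun t => Y (x - t)) t = - pd i Y (x - t) := by
  unfold pd
  have h : HasFDerivAt (fun y : E3 => x - y) (-ContinuousLinearMap.id ℝ E3) t :=
    (hasFDerivAt_id t).const_sub x
  have := ((hY.diffAt (x - t)).hasFDerivAt.comp t h).fderiv
  rw [show (fun y => Y (x - y)) = Y ∘ (fun y => x - y) from rfl, this]
  simp

lemma lap_reflect (hY : ContDiff ℝ (⊤ : ℕ∞) Y) (x : E3) (t : E3) :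
    lap (fun t => Y (x - t)) t = lap Y (x - t) := by
  unfold lap
  refine Finset.sum_congr rfl fun i _ => ?_
  rw [show (fun t => pd i (fun t => Y (x - t)) t) = fun t => - pd i Y (x - t) from
    funext fun t => pd_reflect hY x i t, pd_neg (fun t => pd i Y (x - t)),
    pd_reflect (hY.pd i), neg_neg]

lemma lap_conv (hk : Integrable k) (hY : TF r Y) (x : E3) :
    lap (conv k Y) x = conv k (fun y => lap Y y) x := by
  unfold lap
  have h1 : ∀ i, pd i (fun y => pd i (conv k Y) y) x
      = conv k (fun y => pd i (fun z => pd i Y z) y) x := by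
    intro i
    rw [show (fun y => pd i (conv k Y) y) = conv k (fun y => pd i Y y) from
      funext fun y => pd_conv hk hY i y]
    exact pd_conv hk (hY.pd i) i x
  simp_rw [h1, conv, Finset.mul_sum]
  rw [integral_finsetSum]
  intro i _
  obtain ⟨C, _, hC⟩ := ((hY.pd i).pd i).exists_bound
  exact hk.mul_bdd (c := C) (((hY.pd i).pd i).reflect x).smooth.continuous.aestronglyMeasurable
    (Eventually.of_forall fun y => hC _)

lemma pd_conv_left {s : ℝ} (hk : TF s k) (hY : TF r Y) (i : Fin 3) (x : E3) :
    pd i (conv k Y) x = conv (fun y => pd i k y) Y x := by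
  rw [pd_conv hk.integrable hY]
  unfold conv
  rw [integral_pd_mul hk.smooth (hY.reflect x), ← integral_neg]
  simp_rw [pd_reflect hY.smooth x i, mul_neg, neg_neg]

lemma abs_conv_le {C : ℝ} (hk : ∀ x, |k x| ≤ C) (hY : TF r Y) (x : E3) :
    |conv k Y x| ≤ C * ∫ y, |Y y| := by
  rw [← integral_sub_left_eq_self (fun y => |Y y|) volume x, ← integral_const_mul]
  rw [← Real.norm_eq_abs]
  unfold conv
  refine norm_integral_le_of_norm_le (((hY.reflect x).integrable.abs).const_mul C)
    (Eventually.of_forall fun t => ?_)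
  rw [Real.norm_eq_abs, abs_mul]
  exact mul_le_mul_of_nonneg_right (hk _) (abs_nonneg _)

end conv

/-- Approximate inversion of the Laplacian at unit scale with compact support. -/
lemma exists_unit_parametrix : ∃ C : ℝ, 0 ≤ C ∧ ∀ (r : ℝ) (Y : E3 → ℝ), TF r Y →
    ∃ Z E : E3 → ℝ, TF (r + 1) Z ∧ TF (r + 1) E ∧ (∀ x, lap Z x = Y x + E x) ∧
      (∀ i x, |pd i E x| ≤ C * ∫ y, |Y y|) ∧ (∀ x, |lap E x| ≤ C * ∫ y, |Y y|) := by
  set c := ∫ y, lap smoothNewton y with hc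
  have hc0 : c ≠ 0 := integral_lap_smoothNewton_ne_zero
  set e : E3 → ℝ := fun x => (-c⁻¹) * lap smoothNewton x with he
  have heTF : TF 1 e := TF_lap_smoothNewton.const_mul _
  choose C1 hC1 hC1' using fun i => (heTF.pd i).exists_bound
  choose C2 hC2 hC2' using fun i => ((heTF.pd i).pd i).exists_bound
  have hs1 : 0 ≤ ∑ i, C1 i := Finset.sum_nonneg fun i _ => hC1 i
  have hs2 : 0 ≤ ∑ i, C2 i := Finset.sum_nonneg fun i _ => hC2 i
  refine ⟨∑ i, C1 i + ∑ i, C2 i, by linarith, fun r Y hY => ?_⟩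
  have hI : 0 ≤ ∫ y, |Y y| := integral_nonneg fun y => abs_nonneg _
  refine ⟨fun x => c⁻¹ * conv newtonKernel Y x, conv e Y,
    (TF_conv integrable_newtonKernel newtonKernel_zero hY).const_mul _,
    TF_conv heTF.integrable heTF.zero hY, fun x => ?_, fun i x => ?_, fun x => ?_⟩
  · rw [lap_const_mul (conv_smooth integrable_newtonKernel hY),
      lap_conv integrable_newtonKernel hY]
    have := integral_newtonKernel_mul_lap (hY.reflect x)
    simp_rw [lap_reflect hY.smooth x] at this
    simp only [conv]
    rw [this, ← hc]
    simp_rw [he, mul_assoc]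
    rw [integral_const_mul]
    simp only [sub_zero]
    field_simp
    ring
  · rw [pd_conv_left heTF hY]
    refine (abs_conv_le (hC1' i) hY x).trans (mul_le_mul_of_nonneg_right ?_ hI)
    have := Finset.single_le_sum (fun i _ => hC1 i) (Finset.mem_univ i)
    linarith
  · unfold lap
    have h1 : ∀ i, pd i (fun y => pd i (conv e Y) y) x
        = conv (fun y => pd i (fun z => pd i e z) y) Y x := by
      intro i
      rw [show (fun y => pd i (conv e Y) y) = conv (fun y => pd i e y) Y from
        funext fun y => pd_conv_left heTF hY i y]
      exact pd_conv_left (heTF.pd i) hY i x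
    simp_rw [h1]
    refine (Finset.abs_sum_le_sum_abs _ _).trans ?_
    refine (Finset.sum_le_sum fun i _ => abs_conv_le (hC2' i) hY x).trans ?_
    rw [← Finset.sum_mul]
    exact mul_le_mul_of_nonneg_right (by linarith) hI

/-- Approximate inversion of the Laplacian at scale `s` with compact support. -/
lemma exists_parametrix : ∃ C : ℝ, 0 ≤ C ∧ ∀ (s r : ℝ) (Y : E3 → ℝ), 0 < s → TF r Y →
    ∃ Z E : E3 → ℝ, TF (r + s) Z ∧ TF (r + s) E ∧ (∀ x, lap Z x = Y x + E x) ∧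
      (∀ i x, |pd i E x| ≤ C / s ^ 4 * ∫ y, |Y y|) ∧
      (∀ x, |lap E x| ≤ C / s ^ 5 * ∫ y, |Y y|) := by
  obtain ⟨C, hC, H⟩ := exists_unit_parametrix
  refine ⟨C, hC, fun s r Y hs hY => ?_⟩
  have hsi : 0 < s⁻¹ := inv_pos.2 hs
  obtain ⟨Z, E, hZ, hE, hZE, h1, h2⟩ := H (r / s) _ (hY.comp_smul hs)
  have hI : ∫ y, |Y y| = s ^ 3 * ∫ y, |Y (s • y)| := integral_comp_smul_E3 _ hs
  have hr : (r / s + 1) / s⁻¹ = r + s := by field_simp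
  refine ⟨fun x => s ^ 2 * Z (s⁻¹ • x), fun x => E (s⁻¹ • x), ?_, ?_, fun x => ?_,
    fun i x => ?_, fun x => ?_⟩
  · rw [← hr]; exact (hZ.comp_smul hsi).const_mul _
  · rw [← hr]; exact hE.comp_smul hsi
  · rw [lap_const_mul (hZ.comp_smul hsi).smooth, lap_comp_smul hZ.smooth, hZE, smul_smul,
      mul_inv_cancel₀ hs.ne', one_smul]
    field_simp
  · rw [pd_comp_smul hE.smooth, abs_mul, abs_of_pos hsi, hI]
    calc s⁻¹ * |pd i E (s⁻¹ • x)| ≤ s⁻¹ * (C * ∫ y, |Y (s • y)|) :=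
          mul_le_mul_of_nonneg_left (h1 _ _) hsi.le
      _ = _ := by field_simp
  · rw [lap_comp_smul hE.smooth, abs_mul, abs_of_pos (pow_pos hsi 2), hI]
    calc s⁻¹ ^ 2 * |lap E (s⁻¹ • x)| ≤ s⁻¹ ^ 2 * (C * ∫ y, |Y (s • y)|) :=
          mul_le_mul_of_nonneg_left (h2 _) (pow_pos hsi 2).le
      _ = _ := by field_simp


/-- A smooth cutoff between the balls of radius `R` and `3 * R / 2`, with scaled derivative
bounds. -/
lemma exists_cutoff : ∃ C : ℝ, 0 ≤ C ∧ ∀ R : ℝ, 0 < R → ∃ ψ : E3 → ℝ, TF (3 * R / 2) ψ ∧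
    (∀ x, 0 ≤ ψ x) ∧ (∀ x, ψ x ≤ 1) ∧ (∀ x ∈ ball3 R, ψ x = 1) ∧
    (∀ i x, |pd i ψ x| ≤ C / R) ∧ (∀ i j x, |pd i (fun y => pd j ψ y) x| ≤ C / R ^ 2) := by
  let B : ContDiffBump (0 : E3) := ⟨1, 3 / 2, by norm_num, by norm_num⟩
  have hB : TF (3 / 2) (fun x => B x) := ⟨B.contDiff, fun x hx => B.zero_of_le_dist (by
    rw [dist_zero_right]; exact hx.le)⟩
  choose C1 hC1 hC1' using fun i => (hB.pd i).exists_bound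
  choose C2 hC2 hC2' using fun i j => ((hB.pd j).pd i).exists_bound
  have hs1 : 0 ≤ ∑ i, C1 i := Finset.sum_nonneg fun i _ => hC1 i
  have hs2 : 0 ≤ ∑ i, ∑ j, C2 i j :=
    Finset.sum_nonneg fun i _ => Finset.sum_nonneg fun j _ => hC2 i j
  refine ⟨∑ i, C1 i + ∑ i, ∑ j, C2 i j, by linarith, fun R hR => ?_⟩
  have hRi : 0 < R⁻¹ := inv_pos.2 hR
  refine ⟨fun x => B (R⁻¹ • x), ?_, fun x => B.nonneg, fun x => B.le_one, fun x hx => ?_,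
    fun i x => ?_, fun i j x => ?_⟩
  · have := hB.comp_smul hRi
    rwa [show 3 / 2 / R⁻¹ = 3 * R / 2 by field_simp] at this
  · refine B.one_of_mem_closedBall ?_
    rw [mem_closedBall_zero_iff, norm_smul, Real.norm_eq_abs, abs_of_pos hRi]
    have : ‖x‖ < R := by simpa [ball3] using hx
    rw [inv_mul_le_iff₀ hR]
    show ‖x‖ ≤ R * 1
    linarith
  · rw [pd_comp_smul hB.smooth, abs_mul, abs_of_pos hRi, div_eq_inv_mul]
    refine mul_le_mul_of_nonneg_left ((hC1' i _).trans ?_) hRi.le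
    have := Finset.single_le_sum (fun i _ => hC1 i) (Finset.mem_univ i)
    linarith
  · rw [pd_pd_comp_smul hB.smooth, abs_mul, abs_of_pos (pow_pos hRi 2), div_eq_inv_mul, inv_pow]
    refine mul_le_mul_of_nonneg_left ((hC2' i j _).trans ?_) (by positivity)
    have h1 := Finset.single_le_sum (fun j _ => hC2 i j) (Finset.mem_univ j)
    have h2 := Finset.single_le_sum (f := fun i => ∑ j, C2 i j)
      (fun i _ => Finset.sum_nonneg fun j _ => hC2 i j) (Finset.mem_univ i)
    have h3 : ∑ j, C2 i j ≤ ∑ i, ∑ j, C2 i j := h2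
    linarith

/-- Integrable functions with vanishing integral. -/
def Nul (f : E3 → ℝ) : Prop := Integrable f ∧ ∫ x, f x = 0

section Nul

variable {f g : E3 → ℝ} {r : ℝ}

lemma Nul.add (hf : Nul f) (hg : Nul g) : Nul (fun x => f x + g x) :=
  ⟨hf.1.add hg.1, by rw [integral_add hf.1 hg.1, hf.2, hg.2, add_zero]⟩

lemma Nul.sub (hf : Nul f) (hg : Nul g) : Nul (fun x => f x - g x) :=
  ⟨hf.1.sub hg.1, by rw [integral_sub hf.1 hg.1, hf.2, hg.2, sub_zero]⟩

lemma Nul.const_mul (hf : Nul f) (c : ℝ) : Nul (fun x => c * f x) :=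
  ⟨hf.1.const_mul c, by rw [integral_const_mul, hf.2, mul_zero]⟩

lemma Nul.sum {F : Fin 3 → E3 → ℝ} (hF : ∀ i, Nul (F i)) : Nul (fun x => ∑ i, F i x) :=
  ⟨integrable_finsetSum _ fun i _ => (hF i).1, by
    rw [integral_finsetSum _ fun i _ => (hF i).1]
    exact Finset.sum_eq_zero fun i _ => (hF i).2⟩

lemma Nul.congr (hf : Nul f) (h : ∀ x, f x = g x) : Nul g := (funext h : f = g) ▸ hf

lemma TF.nul_pd (hf : TF r f) (i : Fin 3) : Nul (fun x => _root_.pd i f x) := by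
  refine ⟨(hf.pd i).integrable, ?_⟩
  simpa [_root_.pd] using integral_pd_mul (f := fun _ => 1) contDiff_const hf i

/-- Divergence theorem for compactly supported vector fields. -/
lemma nul_div {F : Fin 3 → E3 → ℝ} (hF : ∀ i, TF r (F i)) :
    Nul (fun x => ∑ i, pd i (F i) x) := Nul.sum fun i => (hF i).nul_pd i

lemma nul_lap_mul {φ : E3 → ℝ} (hφ : TF r φ) (hf : ContDiff ℝ (⊤ : ℕ∞) f) :
    Nul (fun x => lap f x * (φ x * f x) + φ x * ∑ i, (pd i f x) ^ 2
      - 1 / 2 * f x ^ 2 * lap φ x) := by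
  refine (nul_div (F := fun i x => φ x * (f x * pd i f x) - (1 / 2) * ((f x * f x) * pd i φ x))
    fun i => (hφ.mul_right (hf.mul (hf.pd i))).sub
      (((hφ.pd i).mul_left (hf.mul hf)).const_mul _)).congr fun x => ?_
  unfold lap
  rw [Finset.sum_mul, Finset.mul_sum, Finset.mul_sum, ← Finset.sum_add_distrib,
    ← Finset.sum_sub_distrib]
  refine Finset.sum_congr rfl fun i _ => ?_
  rw [pd_sub (hφ.smooth.mul (hf.mul (hf.pd i)))
      (contDiff_const.mul ((hf.mul hf).mul (hφ.smooth.pd i))),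
    pd_mul hφ.smooth (hf.mul (hf.pd i)), pd_mul hf (hf.pd i),
    pd_const_mul ((hf.mul hf).mul (hφ.smooth.pd i)), pd_mul (hf.mul hf) (hφ.smooth.pd i),
    pd_mul hf hf]
  ring

lemma nul_lap_symm {h : E3 → ℝ} (hf : ContDiff ℝ (⊤ : ℕ∞) f) (hh : TF r h) :
    Nul (fun x => lap f x * h x - f x * lap h x) := by
  have h1 := hh.integrable_mul hf.lap.continuous
  have h2 := hh.lap.integrable_mul hf.continuous
  exact ⟨h1.sub h2, by rw [integral_sub h1 h2, integral_lap_mul hf hh, sub_self]⟩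

variable {a : E3 → E3}

lemma nul_transport (ha : ContDiff ℝ (⊤ : ℕ∞) a) (hdiv : ∀ x, vdiv a x = 0)
    {h : E3 → ℝ} (hh : TF r h) : Nul (fun x => ∑ i, a x i * pd i h x) := by
  refine (nul_div (F := fun i x => a x i * h x) fun i => hh.mul_left (ha.comp_coord i)).congr
    fun x => ?_
  simp_rw [fun i => pd_mul (ha.comp_coord i) hh.smooth i x]
  rw [Finset.sum_add_distrib, ← Finset.sum_mul]
  have := hdiv x
  unfold vdiv at this
  rw [this]; ring

/-- Transport by a divergence-free field is skew-symmetric. -/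
lemma nul_transport_mul (ha : ContDiff ℝ (⊤ : ℕ∞) a) (hdiv : ∀ x, vdiv a x = 0)
    {h : E3 → ℝ} (hf : ContDiff ℝ (⊤ : ℕ∞) f) (hh : TF r h) :
    Nul (fun x => (∑ i, a x i * pd i f x) * h x + f x * ∑ i, a x i * pd i h x) := by
  refine (nul_transport ha hdiv (hh.mul_left hf)).congr fun x => ?_
  simp_rw [fun i => pd_mul hf hh.smooth i x, Finset.sum_mul, Finset.mul_sum]
  rw [← Finset.sum_add_distrib]
  exact Finset.sum_congr rfl fun i _ => by ring

lemma nul_transport_cutoff (ha : ContDiff ℝ (⊤ : ℕ∞) a) (hdiv : ∀ x, vdiv a x = 0)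
    {φ : E3 → ℝ} (hφ : TF r φ) (hf : ContDiff ℝ (⊤ : ℕ∞) f) (hg : ContDiff ℝ (⊤ : ℕ∞) g) :
    Nul (fun x => φ x * ((∑ i, a x i * pd i f x) * g x + f x * ∑ i, a x i * pd i g x)
      + (∑ i, a x i * pd i φ x) * (f x * g x)) := by
  refine (nul_transport_mul ha hdiv hf (hφ.mul_right hg)).congr fun x => ?_
  simp_rw [fun i => pd_mul hφ.smooth hg i x, Finset.sum_mul, Finset.mul_sum]
  rw [← Finset.sum_add_distrib, ← Finset.sum_add_distrib, Finset.mul_sum,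
    ← Finset.sum_add_distrib]
  exact Finset.sum_congr rfl fun i _ => by ring

lemma nul_curl {h : Fin 3 → E3 → ℝ} (ha : ContDiff ℝ (⊤ : ℕ∞) a) (hh : ∀ j, TF r (h j)) :
    Nul (fun x => ∑ j, curl3 a x j * h j x
      - (a x 0 * (pd 1 (h 2) x - pd 2 (h 1) x) + a x 1 * (pd 2 (h 0) x - pd 0 (h 2) x)
        + a x 2 * (pd 0 (h 1) x - pd 1 (h 0) x))) := by
  have hF : ∀ i j, TF r (fun x => a x i * h j x) := fun i j => (hh j).mul_left (ha.comp_coord i)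
  have N : ∀ k i j, Nul (fun x => pd k (fun x => a x i * h j x) x) := fun k i j =>
    (hF i j).nul_pd k
  refine (((((N 0 1 2).sub (N 0 2 1)).add ((N 1 2 0).sub (N 1 0 2))).add
    ((N 2 0 1).sub (N 2 1 0)))).congr fun x => ?_
  simp_rw [fun k i j => pd_mul (ha.comp_coord i) (hh j).smooth k x]
  simp [Fin.sum_univ_three, curl3]
  ring

end Nul


section identities

variable {u : E3 → E3} {φ : E3 → ℝ} {r : ℝ}

lemma pd_vdiv_eq_zero (hdiv : ∀ x, vdiv u x = 0) (j : Fin 3) (x : E3) :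
    pd j (fun y => vdiv u y) x = 0 := by
  rw [show (fun y => vdiv u y) = fun _ => 0 from funext hdiv]
  simp [pd]

lemma ContDiff.vdiv (hu : ContDiff ℝ (⊤ : ℕ∞) u) : ContDiff ℝ (⊤ : ℕ∞) (fun x => vdiv u x) :=
  ContDiff.sum fun i _ => (hu.comp_coord i).pd i

lemma nul_grad_vdiv (hu : ContDiff ℝ (⊤ : ℕ∞) u) (hφ : TF r φ) :
    Nul (fun x => ∑ j, pd j (fun y => vdiv u y) x * (φ x * u x j)
      + (φ x * vdiv u x ^ 2 + vdiv u x * ∑ j, pd j φ x * u x j)) := by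
  refine (nul_div (F := fun j x => vdiv u x * (φ x * u x j)) fun j =>
    (hφ.mul_right (hu.comp_coord j)).mul_left hu.vdiv).congr fun x => ?_
  simp_rw [fun j => pd_mul hu.vdiv (hφ.smooth.mul (hu.comp_coord j)) j x,
    fun j => pd_mul hφ.smooth (hu.comp_coord j) j x]
  simp only [_root_.vdiv, Fin.sum_univ_three]
  ring

/-- For a divergence-free field, `φ |curl u|²` and `φ |∇u|²` differ by a lower order term. -/
lemma nul_curl_sq (hu : ContDiff ℝ (⊤ : ℕ∞) u) (hdiv : ∀ x, vdiv u x = 0) (hφ : TF r φ) :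
    Nul (fun x => φ x * ∑ j, curl3 u x j ^ 2 - φ x * gradSq u x
      + ∑ i, ∑ j, u x i * u x j * pd i (fun y => pd j φ y) x) := by
  have hs := fun j => hu.comp_coord j
  have h1 : Nul (fun x => ∑ i, pd i (fun x => ∑ j, φ x * (u x j * pd j (fun y => u y i) x)) x) :=
    nul_div fun i => TF.sum _ fun j => hφ.mul_right ((hs j).mul ((hs i).pd j))
  have h2 : Nul (fun x => ∑ j, pd j (fun x => ∑ i, pd i φ x * (u x j * u x i)) x) :=
    nul_div fun j => TF.sum _ fun i => (hφ.pd i).mul_right ((hs j).mul (hs i))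
  refine ((h2.sub h1)).congr fun x => ?_
  have e0 := hdiv x
  have e : ∀ j, ∑ k, pd k (fun y => pd j (fun z => u z k) y) x = 0 := fun j => by
    rw [← pd_vdiv_eq_zero hdiv j x]
    simp only [vdiv]
    rw [pd_sum Finset.univ (fun k => (hs k).pd k)]
    exact Finset.sum_congr rfl fun k _ => pd_comm (hs k) k j x
  simp only [vdiv] at e0
  simp_rw [fun i => pd_sum Finset.univ
      (fun j => hφ.smooth.mul ((hs j).mul ((hs i).pd j))) i x,
    fun j => pd_sum Finset.univ (fun i => (hφ.smooth.pd i).mul ((hs j).mul (hs i))) j x,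
    fun i j => pd_mul hφ.smooth ((hs j).mul ((hs i).pd j)) i x,
    fun i j => pd_mul (hs j) ((hs i).pd j) i x,
    fun i j => pd_mul (hφ.smooth.pd i) ((hs j).mul (hs i)) j x,
    fun i j => pd_mul (hs j) (hs i) j x]
  have e1 := e 0
  have e2 := e 1
  have e3 := e 2
  simp only [Fin.sum_univ_three, curl3, gradSq, Matrix.cons_val] at e0 e1 e2 e3 ⊢
  linear_combination (pd 0 φ x * u x 0 + pd 1 φ x * u x 1 + pd 2 φ x * u x 2) * e0
    - φ x * (u x 0 * e1 + u x 1 * e2 + u x 2 * e3)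

end identities


section estimates

variable {ρ : ℝ} {F G : E3 → ℝ}

lemma integrableOn_ball3 (hG : Continuous G) (ρ : ℝ) : IntegrableOn G (ball3 ρ) :=
  (hG.continuousOn.integrableOn_compact (isCompact_closedBall 0 ρ)).mono_set
    ball_subset_closedBall

lemma integral_le_setIntegral (hF : Integrable F) (hG : Continuous G)
    (h : ∀ x ∈ ball3 ρ, F x ≤ G x) (h0 : ∀ x, x ∉ ball3 ρ → F x ≤ 0) :
    ∫ x, F x ≤ ∫ x in ball3 ρ, G x := by
  have hm : MeasurableSet (ball3 ρ) := measurableSet_ball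
  rw [← integral_indicator hm]
  refine integral_mono hF ((integrableOn_ball3 hG ρ).integrable_indicator hm)
    fun x => ?_
  by_cases hx : x ∈ ball3 ρ
  · rw [Set.indicator_of_mem hx]; exact h x hx
  · rw [Set.indicator_of_notMem hx]; exact h0 x hx

lemma TF.zero_of_notMem {r : ℝ} (hF : TF r F) (h : r < ρ) {x : E3} (hx : x ∉ ball3 ρ) :
    F x = 0 := hF.zero x (by
  have : ρ ≤ ‖x‖ := by simpa [ball3] using hx
  linarith)

/-- The volume of the unit ball. -/
def unitVol : ℝ := (volume : Measure E3).real (ball3 1)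

lemma unitVol_pos : 0 < unitVol := by
  unfold unitVol ball3
  exact ENNReal.toReal_pos (measure_ball_pos _ _ one_pos).ne' measure_ball_lt_top.ne

lemma volume_ball3 {ρ : ℝ} (hρ : 0 < ρ) :
    (volume : Measure E3).real (ball3 ρ) = ρ ^ 3 * unitVol := by
  unfold unitVol ball3
  rw [Measure.real, Measure.addHaar_ball_of_pos _ _ hρ, finrank_E3, ENNReal.toReal_mul,
    ENNReal.toReal_ofReal (by positivity)]
  rfl

lemma sq_setIntegral_le (hρ : 0 < ρ) (hF : Continuous F) :
    (∫ x in ball3 ρ, F x) ^ 2 ≤ ρ ^ 3 * unitVol * ∫ x in ball3 ρ, F x ^ 2 := by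
  set V := ρ ^ 3 * unitVol with hV
  have hVp : 0 < V := mul_pos (by positivity) unitVol_pos
  set I := ∫ x in ball3 ρ, F x
  have h : 0 ≤ ∫ x in ball3 ρ, (F x - I / V) ^ 2 := integral_nonneg fun x => sq_nonneg _
  have e : ∀ x, (F x - I / V) ^ 2 = F x ^ 2 - (2 * (I / V)) * F x + (I / V) ^ 2 := fun x => by ring
  simp_rw [e] at h
  rw [integral_add, integral_sub, integral_const_mul, setIntegral_const, volume_ball3 hρ, ← hV,
    smul_eq_mul] at h
  · have : V * (∫ x in ball3 ρ, F x ^ 2) - 2 * I * I + I ^ 2 ≥ 0 := by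
      have := mul_nonneg hVp.le h
      have e2 : V * ((∫ x in ball3 ρ, F x ^ 2) - 2 * (I / V) * I + V * (I / V) ^ 2)
        = V * (∫ x in ball3 ρ, F x ^ 2) - 2 * I * I + I ^ 2 := by field_simp
      linarith
    linarith
  · exact integrableOn_ball3 (hF.pow 2) ρ
  · exact integrableOn_ball3 (hF.const_mul _) ρ
  · exact integrableOn_ball3 ((hF.pow 2).sub (hF.const_mul _)) ρ
  · exact integrableOn_ball3 continuous_const ρ

lemma abs_coord_le (v : E3) (j : Fin 3) : |v j| ≤ ‖v‖ := PiLp.norm_apply_le v j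

lemma norm_sq_E3 (v : E3) : ‖v‖ ^ 2 = v 0 ^ 2 + v 1 ^ 2 + v 2 ^ 2 := by
  rw [EuclideanSpace.real_norm_sq_eq, Fin.sum_univ_three]

lemma nul_hessian {r : ℝ} (hF : TF r F) :
    Nul (fun x => ∑ i, ∑ j, (pd i (fun y => pd j F y) x) ^ 2 - lap F x ^ 2) := by
  have h1 : Nul (fun x => ∑ i, pd i (fun x => ∑ j, pd j F x * pd i (fun y => pd j F y) x) x) :=
    nul_div fun i => TF.sum _ fun j => (hF.pd j).mul_right ((hF.smooth.pd j).pd i)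
  have h2 : Nul (fun x => ∑ j, pd j (fun x => pd j F x * lap F x) x) :=
    nul_div fun j => (hF.pd j).mul_right hF.lap.smooth
  refine (h1.sub h2).congr fun x => ?_
  have hs := hF.smooth
  simp_rw [fun i => pd_sum Finset.univ (fun j => (hs.pd j).mul ((hs.pd j).pd i)) i x,
    fun i j => pd_mul (hs.pd j) ((hs.pd j).pd i) i x, fun j => pd_mul (hs.pd j) hs.lap j x,
    ← fun j => lap_pd hs j x]
  simp only [lap, Fin.sum_univ_three]
  ring

/-- An approximate solenoidal correction of a localized divergence-free field. -/
lemma exists_corrector (C₁ : ℝ) : ∃ K : ℝ, 0 ≤ K ∧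
    ∀ (R : ℝ) (φ : E3 → ℝ) (u : E3 → E3), 0 < R → TF (3 * R / 2) φ → (∀ x, 0 ≤ φ x) →
    (∀ x, φ x ≤ 1) → (∀ i x, |pd i φ x| ≤ C₁ / R) → ContDiff ℝ (⊤ : ℕ∞) u →
    (∀ x, vdiv u x = 0) →
    ∃ (q : E3 → ℝ) (E : Fin 3 → E3 → ℝ), TF (7 * R / 4) q ∧ (∀ j, TF (7 * R / 4) (E j)) ∧
      (∀ x, ∑ j, pd j (fun y => φ y * u y j - (pd j q y - E j y)) x = 0) ∧
      (∫ x, ∑ i, ∑ j, (pd i (fun y => pd j q y - E j y) x) ^ 2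
        ≤ K / R ^ 2 * ∫ x in ball3 (2 * R), ‖u x‖ ^ 2) ∧
      (∀ j x, |lap (E j) x| ≤ K / R ^ 5 * ∫ x in ball3 (2 * R), ‖u x‖) := by
  obtain ⟨C, hC, H⟩ := exists_parametrix
  set A := 256 * C with hA
  have hv := unitVol_pos
  refine ⟨1024 * C + 36 * C₁ ^ 2 + 54 * A ^ 2 * (8 * unitVol) ^ 2, by positivity, ?_⟩
  intro R φ u hR hφ hφ0 hφ1 hφd hu hdiv
  have hY : ∀ j, TF (3 * R / 2) (fun x => φ x * u x j) := fun j =>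
    hφ.mul_right (hu.comp_coord j)
  choose Z E hZ hE hZE hE1 hE2 using fun j => H (R / 4) _ _ (by positivity) (hY j)
  rw [show 3 * R / 2 + R / 4 = 7 * R / 4 by ring] at hZ hE
  set I := ∫ x in ball3 (2 * R), ‖u x‖ with hI
  set U := ∫ x in ball3 (2 * R), ‖u x‖ ^ 2 with hU
  have hI0 : 0 ≤ I := integral_nonneg fun x => norm_nonneg _
  have hU0 : 0 ≤ U := integral_nonneg fun x => sq_nonneg _
  have hIU : I ^ 2 ≤ 8 * R ^ 3 * unitVol * U := by
    have := sq_setIntegral_le (ρ := 2 * R) (by positivity) hu.continuous.norm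
    calc _ ≤ _ := this
      _ = _ := by ring
  have hYI : ∀ j, ∫ x, |φ x * u x j| ≤ I := fun j =>
    integral_le_setIntegral (hY j).integrable.abs hu.continuous.norm (fun x _ => by
      rw [abs_mul, abs_of_nonneg (hφ0 x)]
      have := abs_coord_le (u x) j
      nlinarith [hφ0 x, hφ1 x, abs_nonneg (u x j)]) fun x hx => by
      rw [(hY j).zero_of_notMem (by linarith) hx, abs_zero]
  set e := A / R ^ 4 * I with he
  have he0 : 0 ≤ e := by positivity
  have hE1' : ∀ j i x, |pd i (E j) x| ≤ e := fun j i x => by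
    refine (hE1 j i x).trans ?_
    rw [he, hA, show C / (R / 4) ^ 4 = 256 * C / R ^ 4 by field_simp; norm_num]
    exact mul_le_mul_of_nonneg_left (hYI j) (by positivity)
  set q : E3 → ℝ := fun x => ∑ k, pd k (Z k) x with hq
  have hqT : TF (7 * R / 4) q := TF.sum _ fun k => (hZ k).pd k
  have hlapq : ∀ x, lap q x = ∑ k, pd k φ x * u x k + ∑ k, pd k (E k) x := fun x => by
    have h1 : lap q x = ∑ k, pd k (fun y => φ y * u y k + E k y) x := by
      simp_rw [← hZE]
      simp only [hq, _root_.lap]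
      simp_rw [fun i => funext (pd_sum Finset.univ (fun k => (hZ k).smooth.pd k) i),
        fun i => pd_sum Finset.univ (fun k => ((hZ k).smooth.pd k).pd i) i x]
      rw [Finset.sum_comm]
      refine Finset.sum_congr rfl fun k _ => ?_
      exact lap_pd (hZ k).smooth k x
    rw [h1]
    have h2 := hdiv x
    unfold vdiv at h2
    simp_rw [fun k => pd_add (hY k).smooth (hE k).smooth k x,
      fun k => pd_mul hφ.smooth (hu.comp_coord k) k x, Finset.sum_add_distrib, ← Finset.mul_sum]
    rw [h2]
    ring
  refine ⟨q, E, hqT, hE, fun x => ?_, ?_, fun j x => ?_⟩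
  · have h1 : ∀ j y, φ y * u y j - (pd j q y - E j y) = lap (Z j) y - pd j q y := fun j y => by
      rw [hZE]; ring
    simp_rw [h1, fun j => pd_sub (hZ j).smooth.lap (hqT.smooth.pd j) j x,
      ← fun j => lap_pd (hZ j).smooth j x, Finset.sum_sub_distrib]
    simp only [hq, _root_.lap]
    simp_rw [fun i => funext (pd_sum Finset.univ (fun k => (hZ k).smooth.pd k) i),
      fun i => pd_sum Finset.univ (fun k => ((hZ k).smooth.pd k).pd i) i x]
    rw [Finset.sum_comm, sub_self]
  · have hN := (nul_hessian hqT).const_mul 2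
    have hW : ∀ i j, TF (7 * R / 4) (fun x => pd i (fun y => pd j q y - E j y) x) := fun i j =>
      ((hqT.pd j).sub (hE j)).pd i
    have hWI : Integrable (fun x => ∑ i, ∑ j, (pd i (fun y => pd j q y - E j y) x) ^ 2) := by
      simp_rw [pow_two]
      exact (TF.sum _ fun i => TF.sum _ fun j => (hW i j).mul_left (hW i j).smooth).integrable
    have hG : Continuous fun x => 12 * C₁ ^ 2 / R ^ 2 * ‖u x‖ ^ 2 + 54 * e ^ 2 := by
      have := hu.continuous
      fun_prop
    have key := integral_le_setIntegral (ρ := 2 * R) (hWI.sub hN.1) hG (fun x _ => by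
      have hb : ∀ k, (pd k φ x * u x k) ^ 2 ≤ C₁ ^ 2 / R ^ 2 * u x k ^ 2 := fun k => by
        rw [mul_pow, ← div_pow]
        exact mul_le_mul_of_nonneg_right (sq_le_sq' (abs_le.1 (hφd k x)).1 (abs_le.1 (hφd k x)).2)
          (sq_nonneg _)
      have hb2 : ∀ i j, (pd i (E j) x) ^ 2 ≤ e ^ 2 := fun i j =>
        sq_le_sq' (abs_le.1 (hE1' j i x)).1 (abs_le.1 (hE1' j i x)).2
      have hb3 : ∀ i j, (pd i (fun y => pd j q y - E j y) x) ^ 2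
          ≤ 2 * (pd i (fun y => pd j q y) x) ^ 2 + 2 * e ^ 2 := fun i j => by
        rw [pd_sub (hqT.smooth.pd j) (hE j).smooth]
        nlinarith [hb2 i j, sq_nonneg (pd i (fun y => pd j q y) x + pd i (E j) x)]
      have hl : lap q x ^ 2 ≤ 6 * (C₁ ^ 2 / R ^ 2) * ‖u x‖ ^ 2 + 18 * e ^ 2 := by
        have h6 : ∀ a b c d f g : ℝ, (a + b + c + (d + f + g)) ^ 2
          ≤ 6 * (a ^ 2 + b ^ 2 + c ^ 2 + d ^ 2 + f ^ 2 + g ^ 2) := fun a b c d f g => by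
          nlinarith [sq_nonneg (a - b), sq_nonneg (a - c), sq_nonneg (a - d), sq_nonneg (a - f),
            sq_nonneg (a - g), sq_nonneg (b - c), sq_nonneg (b - d), sq_nonneg (b - f),
            sq_nonneg (b - g), sq_nonneg (c - d), sq_nonneg (c - f), sq_nonneg (c - g),
            sq_nonneg (d - f), sq_nonneg (d - g), sq_nonneg (f - g)]
        rw [hlapq, norm_sq_E3]
        simp only [Fin.sum_univ_three]
        refine (h6 _ _ _ _ _ _).trans ?_
        linarith [hb 0, hb 1, hb 2, hb2 0 0, hb2 1 1, hb2 2 2]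
      have hs : ∑ i, ∑ j, (pd i (fun y => pd j q y - E j y) x) ^ 2
          ≤ ∑ i : Fin 3, ∑ j : Fin 3, (2 * (pd i (fun y => pd j q y) x) ^ 2 + 2 * e ^ 2) :=
        Finset.sum_le_sum fun i _ => Finset.sum_le_sum fun j _ => hb3 i j
      simp_rw [Finset.sum_add_distrib, ← Finset.mul_sum] at hs
      simp only [Finset.sum_const, Finset.card_univ, Fintype.card_fin, nsmul_eq_mul] at hs
      push_cast at hs
      simp only [Pi.sub_apply]
      have : 12 * C₁ ^ 2 / R ^ 2 * ‖u x‖ ^ 2 = 2 * (6 * (C₁ ^ 2 / R ^ 2) * ‖u x‖ ^ 2) := by ring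
      rw [this]
      linarith) fun x hx => by
      have hl : lap q x = 0 := hqT.lap.zero_of_notMem (by linarith) hx
      have h1 : ∀ i j, pd i (fun y => pd j q y - E j y) x = 0 := fun i j =>
        (hW i j).zero_of_notMem (by linarith) hx
      have h2 : ∀ i j, pd i (fun y => pd j q y) x = 0 := fun i j =>
        ((hqT.pd j).pd i).zero_of_notMem (by linarith) hx
      simp [hl, h1, h2]
    simp only [Pi.sub_apply] at key
    rw [integral_sub hWI hN.1, hN.2, sub_zero] at key
    refine key.trans ?_
    have hi : IntegrableOn (fun x => 12 * C₁ ^ 2 / R ^ 2 * ‖u x‖ ^ 2) (ball3 (2 * R)) :=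
      integrableOn_ball3 (continuous_const.mul (hu.continuous.norm.pow 2)) _
    rw [integral_add hi
      (integrableOn_ball3 continuous_const _), integral_const_mul, setIntegral_const,
      volume_ball3 (by positivity), smul_eq_mul, ← hU]
    have h1 : (2 * R) ^ 3 * unitVol * (54 * e ^ 2)
        ≤ 54 * A ^ 2 * (8 * unitVol) ^ 2 / R ^ 2 * U := by
      calc (2 * R) ^ 3 * unitVol * (54 * e ^ 2)
          = (8 * R ^ 3 * unitVol * 54 * (A / R ^ 4) ^ 2) * I ^ 2 := by rw [he]; ring
        _ ≤ (8 * R ^ 3 * unitVol * 54 * (A / R ^ 4) ^ 2) * (8 * R ^ 3 * unitVol * U) :=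
          mul_le_mul_of_nonneg_left hIU (by positivity)
        _ = _ := by field_simp
    have h2 : (1024 * C + 36 * C₁ ^ 2 + 54 * A ^ 2 * (8 * unitVol) ^ 2) / R ^ 2 * U
        = 1024 * C / R ^ 2 * U + 12 * C₁ ^ 2 / R ^ 2 * U + 24 * C₁ ^ 2 / R ^ 2 * U
          + 54 * A ^ 2 * (8 * unitVol) ^ 2 / R ^ 2 * U := by ring
    rw [h2]
    have h3 : 0 ≤ 1024 * C / R ^ 2 * U := by positivity
    have h4 : 0 ≤ 24 * C₁ ^ 2 / R ^ 2 * U := by positivity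
    linarith
  · refine (hE2 j x).trans ?_
    rw [show C / (R / 4) ^ 5 = 1024 * C / R ^ 5 by field_simp; norm_num]
    refine mul_le_mul (div_le_div_of_nonneg_right ?_ (by positivity)) (hYI j)
      (integral_nonneg fun x => abs_nonneg _) (by positivity)
    have : 0 ≤ 36 * C₁ ^ 2 + 54 * A ^ 2 * (8 * unitVol) ^ 2 := by positivity
    linarith

end estimates


section energy

variable {u w b : E3 → E3} {P φ Q : E3 → ℝ} {W L : Fin 3 → E3 → ℝ} {r ρ : ℝ}

lemma nul_energy_w (H : IsMMPSolution u w b P) (hφ : TF r φ) :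
    Nul (fun x => φ x * gradSq w x - 1 / 2 * (∑ j, w x j ^ 2) * lap φ x
      - 1 / 2 * (∑ i, u x i * pd i φ x) * ∑ j, w x j ^ 2
      + (φ x * vdiv w x ^ 2 + vdiv w x * ∑ j, pd j φ x * w x j)
      - φ x * ∑ j, w x j * curl3 u x j + 2 * φ x * ∑ j, w x j ^ 2) := by
  have hw := fun j => H.smooth_w.comp_coord j
  have n1 := Nul.sum fun j => nul_lap_mul hφ (hw j)
  have n2 := Nul.sum fun j => nul_transport_cutoff H.smooth_u H.div_u hφ (hw j) (hw j)
  have n3 := nul_grad_vdiv H.smooth_w hφ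
  refine ((n1.sub (n2.const_mul (1 / 2))).add n3).congr fun x => ?_
  have e := H.eq_w x
  have e0 := e 0
  have e1 := e 1
  have e2 := e 2
  simp only [gradSq, Fin.sum_univ_three] at e0 e1 e2 ⊢
  linear_combination (-φ x * w x 0) * e0 - φ x * w x 1 * e1 - φ x * w x 2 * e2

lemma nul_energy_b (H : IsMMPSolution u w b P) (hφ : TF r φ) :
    Nul (fun x => φ x * gradSq b x - 1 / 2 * (∑ j, b x j ^ 2) * lap φ x
      - 1 / 2 * (∑ i, u x i * pd i φ x) * ∑ j, b x j ^ 2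
      - ∑ j, (∑ i, b x i * pd i (fun y => u y j) x) * (φ x * b x j)) := by
  have hb := fun j => H.smooth_b.comp_coord j
  have n1 := Nul.sum fun j => nul_lap_mul hφ (hb j)
  have n2 := Nul.sum fun j => nul_transport_cutoff H.smooth_u H.div_u hφ (hb j) (hb j)
  refine (n1.sub (n2.const_mul (1 / 2))).congr fun x => ?_
  have e := H.eq_b x
  have e0 := e 0
  have e1 := e 1
  have e2 := e 2
  simp only [gradSq, Fin.sum_univ_three] at e0 e1 e2 ⊢
  linear_combination (-φ x * b x 0) * e0 - φ x * b x 1 * e1 - φ x * b x 2 * e2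

lemma nul_pressure {V : Fin 3 → E3 → ℝ} (hP : ContDiff ℝ (⊤ : ℕ∞) P) (hV : ∀ j, TF r (V j))
    (hdiv : ∀ x, ∑ j, pd j (V j) x = 0) : Nul (fun x => ∑ j, pd j P x * V j x) := by
  refine (nul_div (F := fun j x => P x * V j x) fun j => (hV j).mul_left hP).congr fun x => ?_
  simp_rw [fun j => pd_mul hP (hV j).smooth j x, Finset.sum_add_distrib, ← Finset.mul_sum]
  rw [hdiv x]
  ring

lemma nul_energy_u (H : IsMMPSolution u w b P) (hφ : TF r φ) (hW : ∀ j, TF r (W j))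
    (hQ : TF r Q) (hlap : ∀ j x, lap (W j) x = pd j Q x - L j x)
    (hV : ∀ x, ∑ j, pd j (fun y => φ y * u y j - W j y) x = 0) :
    Nul (fun x => φ x * gradSq u x - 1 / 2 * (∑ j, u x j ^ 2) * lap φ x
      - 1 / 2 * (∑ i, u x i * pd i φ x) * ∑ j, u x j ^ 2
      - ∑ j, (∑ i, b x i * pd i (fun y => b y j) x) * (φ x * u x j)
      - φ x * ∑ j, w x j * curl3 u x j
      - (w x 0 * (pd 1 φ x * u x 2 - pd 2 φ x * u x 1)
        + w x 1 * (pd 2 φ x * u x 0 - pd 0 φ x * u x 2)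
        + w x 2 * (pd 0 φ x * u x 1 - pd 1 φ x * u x 0))
      - ∑ j, u x j * L j x
      + ∑ j, u x j * ∑ i, u x i * pd i (W j) x - ∑ j, b x j * ∑ i, b x i * pd i (W j) x
      + (w x 0 * (pd 1 (W 2) x - pd 2 (W 1) x) + w x 1 * (pd 2 (W 0) x - pd 0 (W 2) x)
        + w x 2 * (pd 0 (W 1) x - pd 1 (W 0) x))) := by
  have hu := fun j => H.smooth_u.comp_coord j
  have hb := fun j => H.smooth_b.comp_coord j
  have n1 := Nul.sum fun j => nul_lap_mul hφ (hu j)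
  have n2 := Nul.sum fun j => nul_transport_cutoff H.smooth_u H.div_u hφ (hu j) (hu j)
  have n3 := Nul.sum fun j => nul_lap_symm (hu j) (hW j)
  have n4 := nul_transport H.smooth_u H.div_u hQ
  have n5 := Nul.sum fun j => nul_transport_mul H.smooth_u H.div_u (hu j) (hW j)
  have n6 := Nul.sum fun j => nul_transport_mul H.smooth_b H.div_b (hb j) (hW j)
  have n7 := nul_pressure (V := fun j x => φ x * u x j - W j x) H.smooth_P
    (fun j => (hφ.mul_right (hu j)).sub (hW j)) hV
  have n8 := nul_curl (h := fun j x => φ x * u x j) H.smooth_w fun j => hφ.mul_right (hu j)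
  have n9 := nul_curl H.smooth_w hW
  refine ((((((((n1.sub (n2.const_mul (1 / 2))).sub n3).sub n4).add n5).sub n6).sub n7).add
    n8).sub n9).congr fun x => ?_
  have e := H.eq_u x
  have e0 := e 0
  have e1 := e 1
  have e2 := e 2
  simp_rw [fun i j => pd_mul hφ.smooth (hu j) i x, hlap]
  simp only [gradSq, curl3, Fin.sum_univ_three, Matrix.cons_val] at e0 e1 e2 ⊢
  linear_combination (-φ x * u x 0 + W 0 x) * e0 + (W 1 x - φ x * u x 1) * e1
    + (W 2 x - φ x * u x 2) * e2

end energy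


section algebra

variable {a g : Fin 3 → ℝ} {M R c : ℝ}

lemma abs_mul_le_weighted (hR : 0 < R) (x y : ℝ) : |x * y| ≤ 1 / 2 * (R⁻¹ * x ^ 2 + R * y ^ 2) := by
  have h : 0 ≤ (|x| - R * |y|) ^ 2 * R⁻¹ := mul_nonneg (sq_nonneg _) (inv_nonneg.2 hR.le)
  have e : (|x| - R * |y|) ^ 2 * R⁻¹ = R⁻¹ * |x| ^ 2 - 2 * (|x| * |y|) + R * |y| ^ 2 := by
    field_simp
    ring
  rw [e, sq_abs, sq_abs] at h
  rw [abs_mul]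
  linarith

lemma abs_convection_le (hR : 0 < R) (ha : ∀ i, |a i| ≤ M) (D : Fin 3 → Fin 3 → ℝ) :
    |∑ j, a j * ∑ i, a i * D i j|
      ≤ M * (3 / 2 * R⁻¹ * ∑ j, a j ^ 2 + R / 2 * ∑ i, ∑ j, D i j ^ 2) := by
  have hM : 0 ≤ M := (abs_nonneg _).trans (ha 0)
  calc |∑ j, a j * ∑ i, a i * D i j| ≤ ∑ j, |a j * ∑ i, a i * D i j| :=
        Finset.abs_sum_le_sum_abs _ _
    _ ≤ ∑ j, ∑ i, |a i| * |a j * D i j| := Finset.sum_le_sum fun j _ => by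
        rw [Finset.mul_sum]
        refine (Finset.abs_sum_le_sum_abs _ _).trans (le_of_eq ?_)
        refine Finset.sum_congr rfl fun i _ => ?_
        rw [← abs_mul]
        ring_nf
    _ ≤ ∑ j, ∑ i, M * (1 / 2 * (R⁻¹ * a j ^ 2 + R * D i j ^ 2)) :=
        Finset.sum_le_sum fun j _ => Finset.sum_le_sum fun i _ =>
          mul_le_mul (ha i) (abs_mul_le_weighted hR _ _) (abs_nonneg _) hM
    _ = _ := by simp only [Fin.sum_univ_three]; ring

lemma abs_dot_le (ha : ∀ i, |a i| ≤ M) (hg : ∀ i, |g i| ≤ c) : |∑ i, a i * g i| ≤ 3 * c * M := by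
  have hM : 0 ≤ M := (abs_nonneg _).trans (ha 0)
  refine (Finset.abs_sum_le_sum_abs _ _).trans ?_
  calc ∑ i, |a i * g i| ≤ ∑ _i : Fin 3, M * c := Finset.sum_le_sum fun i _ => by
        rw [abs_mul]
        exact mul_le_mul (ha i) (hg i) (abs_nonneg _) hM
    _ = _ := by simp; ring

lemma abs_quadratic_le {h : Fin 3 → Fin 3 → ℝ} (hh : ∀ i j, |h i j| ≤ c) :
    |∑ i, ∑ j, a i * a j * h i j| ≤ 3 * c * ∑ j, a j ^ 2 := by
  have hc : 0 ≤ c := (abs_nonneg _).trans (hh 0 0)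
  calc |∑ i, ∑ j, a i * a j * h i j| ≤ ∑ i, ∑ j, |a i * a j * h i j| :=
        (Finset.abs_sum_le_sum_abs _ _).trans
          (Finset.sum_le_sum fun i _ => Finset.abs_sum_le_sum_abs _ _)
    _ ≤ ∑ i, ∑ j, (1 / 2 * (a i ^ 2 + a j ^ 2)) * c :=
        Finset.sum_le_sum fun i _ => Finset.sum_le_sum fun j _ => by
          rw [abs_mul]
          refine mul_le_mul ?_ (hh i j) (abs_nonneg _) (by positivity)
          simpa using abs_mul_le_weighted one_pos (a i) (a j)
    _ = _ := by simp only [Fin.sum_univ_three]; ring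

lemma abs_cross_le {v : Fin 3 → ℝ} (hg : ∀ i, |g i| ≤ c) :
    |a 0 * (g 1 * v 2 - g 2 * v 1) + a 1 * (g 2 * v 0 - g 0 * v 2)
      + a 2 * (g 0 * v 1 - g 1 * v 0)| ≤ c * (∑ j, a j ^ 2 + ∑ j, v j ^ 2) := by
  have hc : 0 ≤ c := (abs_nonneg _).trans (hg 0)
  have h : ∀ i j k, |g i * (a j * v k)| ≤ c * (1 / 2 * (a j ^ 2 + v k ^ 2)) := fun i j k => by
    rw [abs_mul]
    refine mul_le_mul (hg i) ?_ (abs_nonneg _) hc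
    simpa using abs_mul_le_weighted one_pos (a j) (v k)
  have h1 := fun i j k => abs_le.1 (h i j k)
  simp only [Fin.sum_univ_three]
  rw [abs_le]
  constructor
  · linarith [(h1 1 0 2).1, (h1 2 0 1).2, (h1 2 1 0).1, (h1 0 1 2).2, (h1 0 2 1).1, (h1 1 2 0).2]
  · linarith [(h1 1 0 2).2, (h1 2 0 1).1, (h1 2 1 0).2, (h1 0 1 2).1, (h1 0 2 1).2, (h1 1 2 0).1]

lemma abs_curl_le (hR : 0 < R) (D : Fin 3 → Fin 3 → ℝ) :
    |a 0 * (D 1 2 - D 2 1) + a 1 * (D 2 0 - D 0 2) + a 2 * (D 0 1 - D 1 0)|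
      ≤ R⁻¹ * ∑ j, a j ^ 2 + R / 2 * ∑ i, ∑ j, D i j ^ 2 := by
  have h := fun k i j => abs_le.1 (abs_mul_le_weighted hR (a k) (D i j))
  have hd : ∀ i, 0 ≤ R * D i i ^ 2 := fun i => by positivity
  simp only [Fin.sum_univ_three]
  rw [abs_le]
  constructor
  · linarith [(h 0 1 2).1, (h 0 2 1).2, (h 1 2 0).1, (h 1 0 2).2, (h 2 0 1).1, (h 2 1 0).2,
      hd 0, hd 1, hd 2]
  · linarith [(h 0 1 2).2, (h 0 2 1).1, (h 1 2 0).2, (h 1 0 2).1, (h 2 0 1).2, (h 2 1 0).1,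
      hd 0, hd 1, hd 2]

end algebra


section main

variable {u w b : E3 → E3} {P φ ψ Q : E3 → ℝ} {W L : Fin 3 → E3 → ℝ} {r : ℝ}

lemma nul_energy (H : IsMMPSolution u w b P) (hφ : TF r φ) (hW : ∀ j, TF r (W j))
    (hQ : TF r Q) (hlap : ∀ j x, lap (W j) x = pd j Q x - L j x)
    (hV : ∀ x, ∑ j, pd j (fun y => φ y * u y j - W j y) x = 0) :
    ∃ N : E3 → ℝ, Nul N ∧ ∀ x, N x = φ x * (1 / 2 * gradSq u x + gradSq b x + gradSq w x)
      + φ x * (1 / 2 * ∑ j, curl3 u x j ^ 2 - 2 * ∑ j, w x j * curl3 u x j + 2 * ∑ j, w x j ^ 2)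
      + (φ x * vdiv w x ^ 2 + vdiv w x * ∑ j, pd j φ x * w x j)
      + 1 / 2 * ∑ i, ∑ j, u x i * u x j * pd i (fun y => pd j φ y) x
      - 1 / 2 * (∑ j, u x j ^ 2 + ∑ j, b x j ^ 2 + ∑ j, w x j ^ 2) * lap φ x
      - 1 / 2 * (∑ i, u x i * pd i φ x) * (∑ j, u x j ^ 2 + ∑ j, b x j ^ 2 + ∑ j, w x j ^ 2)
      + (∑ i, b x i * pd i φ x) * ∑ j, b x j * u x j
      - (w x 0 * (pd 1 φ x * u x 2 - pd 2 φ x * u x 1)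
        + w x 1 * (pd 2 φ x * u x 0 - pd 0 φ x * u x 2)
        + w x 2 * (pd 0 φ x * u x 1 - pd 1 φ x * u x 0))
      - ∑ j, u x j * L j x
      + ∑ j, u x j * ∑ i, u x i * pd i (W j) x - ∑ j, b x j * ∑ i, b x i * pd i (W j) x
      + (w x 0 * (pd 1 (W 2) x - pd 2 (W 1) x) + w x 1 * (pd 2 (W 0) x - pd 0 (W 2) x)
        + w x 2 * (pd 0 (W 1) x - pd 1 (W 0) x)) := by
  have n := Nul.sum fun j => nul_transport_cutoff H.smooth_b H.div_b hφ
    (H.smooth_b.comp_coord j) (H.smooth_u.comp_coord j)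
  refine ⟨_, (((((nul_energy_u H hφ hW hQ hlap hV).add (nul_energy_w H hφ)).add
    (nul_energy_b H hφ)).add n).add
    ((nul_curl_sq H.smooth_u H.div_u hφ).const_mul (1 / 2))).congr fun x => ?_, fun x => rfl⟩
  have e : ∑ j, (φ x * ((∑ i, b x i * pd i (fun y => b y j) x) * u x j
      + b x j * ∑ i, b x i * pd i (fun y => u y j) x)
      + (∑ i, b x i * pd i φ x) * (b x j * u x j))
      = ∑ j, (∑ i, b x i * pd i (fun y => b y j) x) * (φ x * u x j)
        + ∑ j, (∑ i, b x i * pd i (fun y => u y j) x) * (φ x * b x j)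
        + (∑ i, b x i * pd i φ x) * ∑ j, b x j * u x j := by
    rw [Finset.mul_sum, ← Finset.sum_add_distrib, ← Finset.sum_add_distrib]
    exact Finset.sum_congr rfl fun j _ => by ring
  rw [e]
  ring

lemma gradSq_nonneg (v : E3 → E3) (x : E3) : 0 ≤ gradSq v x :=
  Finset.sum_nonneg fun _ _ => Finset.sum_nonneg fun _ _ => sq_nonneg _

lemma norm_sq_E3_sum (v : E3) : ‖v‖ ^ 2 = ∑ j, v j ^ 2 := EuclideanSpace.real_norm_sq_eq v

lemma continuous_gradSq {v : E3 → E3} (hv : ContDiff ℝ (⊤ : ℕ∞) v) : Continuous (gradSq v) :=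
  continuous_finsetSum _ fun j _ => continuous_finsetSum _ fun i _ =>
    (((hv.comp_coord j).pd i).continuous).pow 2

lemma div_term_ge {ψ D s c M : ℝ} (hs : |s| ≤ 3 * c * M) :
    -(9 * c ^ 2 * M ^ 2) ≤ ψ * ψ * D ^ 2 + D * (2 * ψ * s) := by
  have := sq_le_sq' (abs_le.1 hs).1 (abs_le.1 hs).2
  nlinarith [sq_nonneg (ψ * D + s)]

lemma curl_term_nonneg (v k : Fin 3 → ℝ) :
    0 ≤ 1 / 2 * ∑ j, k j ^ 2 - 2 * ∑ j, v j * k j + 2 * ∑ j, v j ^ 2 := by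
  have : 0 ≤ ∑ j, 1 / 2 * (k j - 2 * v j) ^ 2 := Finset.sum_nonneg fun j _ => by positivity
  simp only [Fin.sum_univ_three] at this ⊢
  linarith

lemma abs_sum_mul_le (a v e : Fin 3 → ℝ) :
    |∑ j, a j * v j| ≤ ∑ j, v j ^ 2 + ∑ j, a j ^ 2 + ∑ j, e j ^ 2 := by
  have h : ∀ x y : ℝ, |x * y| ≤ 1 / 2 * (1⁻¹ * x ^ 2 + 1 * y ^ 2) :=
    fun x y => abs_mul_le_weighted one_pos x y
  have h1 : |∑ j, a j * v j| ≤ ∑ j, 1 / 2 * (1⁻¹ * a j ^ 2 + 1 * v j ^ 2) :=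
    (Finset.abs_sum_le_sum_abs _ _).trans (Finset.sum_le_sum fun j _ => h _ _)
  have h2 : 0 ≤ ∑ j, e j ^ 2 := by positivity
  have h3 : 0 ≤ ∑ j, v j ^ 2 := by positivity
  have h4 : 0 ≤ ∑ j, a j ^ 2 := by positivity
  simp only [Fin.sum_univ_three] at *
  linarith

lemma energy_terms_le {c r R Mu Mb su sb sw s ℓ nu t2 t3 t4 t5 t6 t7 t8 t9 t10 t11 t12 : ℝ}
    (hc : 0 ≤ c) (hr : 0 < r) (hr1 : r ≤ 1) (hR : 0 < R) (hMu : 0 ≤ Mu) (hMb : 0 ≤ Mb)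
    (hsu : 0 ≤ su) (hsb : 0 ≤ sb) (hsw : 0 ≤ sw) (hs : 0 ≤ s)
    (h2 : 0 ≤ t2) (h3 : -(9 * (c * r) ^ 2 * sw) ≤ t3)
    (h4 : |t4| ≤ 3 * ((2 * c ^ 2 + 2 * c) * r) * su)
    (h5 : |t5| ≤ 3 * ((2 * c ^ 2 + 2 * c) * r))
    (h6 : |t6| ≤ 3 * (2 * c * r) * Mu)
    (h7 : |t7| ≤ 3 * (2 * c * r) * Mb * (su + sb + sw))
    (h8 : |t8| ≤ 2 * c * r * (sw + su)) (h9 : |t9| ≤ 3 * ℓ * nu)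
    (h10 : |t10| ≤ Mu * (3 / 2 * r * su + R / 2 * s))
    (h11 : |t11| ≤ Mb * (3 / 2 * r * sb + R / 2 * s)) (h12 : |t12| ≤ r * sw + R / 2 * s) :
    0 ≤ t2 + t3 + 1 / 2 * t4 - 1 / 2 * (su + sb + sw) * t5 - (1 / 2 * t6) * (su + sb + sw) + t7
      - t8 - t9 + t10 - t11 + t12 + (24 * c ^ 2 + 40 * c + 3) * (1 + Mu + Mb) * R * s
      + ((24 * c ^ 2 + 40 * c + 3) * (1 + Mu + Mb) * r * (su + sb + sw) + 3 * ℓ * nu) := by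
  set X := su + sb + sw with hX
  have hX0 : 0 ≤ X := by positivity
  have h5' := (abs_le.1 ((abs_mul X t5).trans_le (mul_le_mul_of_nonneg_left h5 (abs_nonneg X)))).2
  have h6' := (abs_le.1 ((abs_mul t6 X).trans_le (mul_le_mul_of_nonneg_right h6 (abs_nonneg X)))).2
  rw [abs_of_nonneg hX0] at h5' h6'
  replace h4 := (abs_le.1 h4).1
  replace h7 := (abs_le.1 h7).1
  replace h8 := (abs_le.1 h8).2
  replace h9 := (abs_le.1 h9).2
  replace h10 := (abs_le.1 h10).1
  replace h11 := (abs_le.1 h11).2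
  replace h12 := (abs_le.1 h12).1
  have k1 : c ^ 2 * r ^ 2 * sw ≤ c ^ 2 * r * X := by
    have h1 : r ^ 2 ≤ r := by nlinarith
    exact mul_le_mul (mul_le_mul_of_nonneg_left h1 (sq_nonneg c)) (by linarith) hsw
      (by positivity)
  have hx : ∀ y, y ≤ X → r * y ≤ r * X := fun y hy => mul_le_mul_of_nonneg_left hy hr.le
  have k2 := mul_le_mul_of_nonneg_left (hx su (by linarith))
    (show 0 ≤ 3 * c ^ 2 + 3 * c + 3 / 2 * Mu by positivity)
  have k3 := mul_le_mul_of_nonneg_left (hx sb (by linarith)) (show 0 ≤ 3 / 2 * Mb by positivity)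
  have k4 := mul_le_mul_of_nonneg_left (hx (sw + su) (by linarith))
    (show 0 ≤ 2 * c by positivity)
  have k5 := hx sw (by linarith)
  have k6 : 0 ≤ (24 * c ^ 2 + 40 * c + 3 - 1 / 2) * ((1 + Mu + Mb) * R * s) :=
    mul_nonneg (by nlinarith) (by positivity)
  have k7 : 0 ≤ (9 * c ^ 2 + 32 * c + 2 + (24 * c ^ 2 + 34 * c + 3 / 2) * (Mu + Mb)) * (r * X) := by
    positivity
  have k8 : 0 ≤ 3 * c * Mu * (r * X) := by positivity
  linarith

end main

section main

variable {u w b : E3 → E3}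

lemma exists_dirichlet_le : ∃ C : ℝ, 0 ≤ C ∧ ∀ (u w b : E3 → E3) (P : E3 → ℝ) (Mu Mb R : ℝ),
    IsMMPSolution u w b P → (∀ x, ‖u x‖ ≤ Mu) → (∀ x, ‖b x‖ ≤ Mb) → 1 < R →
    ∫ x in ball3 R, (gradSq u x + gradSq b x + gradSq w x)
      ≤ C * (1 + Mu + Mb) / R * ∫ x in ball3 (2 * R), (‖u x‖ ^ 2 + ‖b x‖ ^ 2 + ‖w x‖ ^ 2) := by
  obtain ⟨c, hc, Hψ⟩ := exists_cutoff
  obtain ⟨K, hK, HW⟩ := exists_corrector (2 * c)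
  have hv := unitVol_pos
  set T := 24 * c ^ 2 + 40 * c + 3 with hT
  have hT0 : 0 ≤ T := by positivity
  refine ⟨2 * (T + T * K + 24 * K * unitVol), by positivity, ?_⟩
  intro u w b P Mu Mb R H hMu hMb hR1
  have hR : 0 < R := by linarith
  have hMu0 : 0 ≤ Mu := (norm_nonneg _).trans (hMu 0)
  have hMb0 : 0 ≤ Mb := (norm_nonneg _).trans (hMb 0)
  obtain ⟨ψ, hψ, hψ0, hψ1, hψR, hψd, hψdd⟩ := Hψ R hR
  set φ : E3 → ℝ := fun x => ψ x * ψ x with hφdef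
  have hφ : TF (3 * R / 2) φ := hψ.mul_left hψ.smooth
  have hφ0 : ∀ x, 0 ≤ φ x := fun x => mul_nonneg (hψ0 x) (hψ0 x)
  have hφ1 : ∀ x, φ x ≤ 1 := fun x => mul_le_one₀ (hψ1 x) (hψ0 x) (hψ1 x)
  have hφpd : ∀ i x, pd i φ x = 2 * ψ x * pd i ψ x := fun i x => by
    rw [hφdef, pd_mul hψ.smooth hψ.smooth]; ring
  have hφd : ∀ i x, |pd i φ x| ≤ 2 * c / R := fun i x => by
    rw [hφpd, abs_mul, abs_mul, abs_two, abs_of_nonneg (hψ0 x), mul_div_assoc, mul_assoc]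
    refine mul_le_mul_of_nonneg_left ?_ zero_le_two
    nlinarith [hψ0 x, hψ1 x, hψd i x, abs_nonneg (pd i ψ x)]
  have hφdd : ∀ i j x, |pd i (fun y => pd j φ y) x| ≤ (2 * c ^ 2 + 2 * c) / R := fun i j x => by
    rw [show (fun y => pd j φ y) = fun y => 2 * (ψ y * pd j ψ y) from
        funext fun y => by rw [hφpd, mul_assoc],
      pd_const_mul (hψ.smooth.mul (hψ.smooth.pd j)), pd_mul hψ.smooth (hψ.smooth.pd j), abs_mul,
      abs_two]
    have h1 : |pd i ψ x * pd j ψ x| ≤ c / R * (c / R) := by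
      rw [abs_mul]
      exact mul_le_mul (hψd i x) (hψd j x) (abs_nonneg _) (by positivity)
    have h2 : |ψ x * pd i (fun y => pd j ψ y) x| ≤ c / R ^ 2 := by
      rw [abs_mul, abs_of_nonneg (hψ0 x)]
      nlinarith [hψ0 x, hψ1 x, hψdd i j x, abs_nonneg (pd i (fun y => pd j ψ y) x)]
    have h3 : 2 * (c / R * (c / R) + c / R ^ 2) ≤ (2 * c ^ 2 + 2 * c) / R := by
      rw [show 2 * (c / R * (c / R) + c / R ^ 2) = (2 * c ^ 2 + 2 * c) / (R * R) by
        field_simp]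
      exact div_le_div_of_nonneg_left (by positivity) hR (by nlinarith)
    have h4 := abs_add_le (pd i ψ x * pd j ψ x) (ψ x * pd i (fun y => pd j ψ y) x)
    linarith
  obtain ⟨q, E, hq, hE, hV, hWS, hWL⟩ := HW R φ u hR hφ hφ0 hφ1 hφd H.smooth_u H.div_u
  set W : Fin 3 → E3 → ℝ := fun j y => pd j q y - E j y with hWdef
  have hW : ∀ j, TF (7 * R / 4) (W j) := fun j => (hq.pd j).sub (hE j)
  have hlap : ∀ j x, lap (W j) x = pd j (fun y => lap q y) x - lap (E j) x := fun j x => by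
    rw [hWdef, lap_sub (hq.smooth.pd j) (hE j).smooth, lap_pd hq.smooth]
  obtain ⟨N, hN, hNx⟩ := nul_energy (L := fun j x => lap (E j) x) H (hφ.mono (by linarith)) hW hq.lap hlap hV
  set ℓ := K / R ^ 5 * ∫ x in ball3 (2 * R), ‖u x‖ with hℓ
  set M := 1 + Mu + Mb with hM
  set S : E3 → ℝ := fun x => ∑ i, ∑ j, (pd i (W j) x) ^ 2 with hS
  set X : E3 → ℝ := fun x => ‖u x‖ ^ 2 + ‖b x‖ ^ 2 + ‖w x‖ ^ 2 with hX
  set G : E3 → ℝ := fun x => 1 / 2 * gradSq u x + gradSq b x + gradSq w x with hG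
  have hGc : Continuous G := by
    have h1 := continuous_gradSq H.smooth_u
    have h2 := continuous_gradSq H.smooth_b
    have h3 := continuous_gradSq H.smooth_w
    fun_prop
  have hG0 : ∀ x, 0 ≤ G x := fun x => by
    have h1 := gradSq_nonneg u x
    have h2 := gradSq_nonneg b x
    have h3 := gradSq_nonneg w x
    simp only [hG]
    linarith
  have hX0 : ∀ x, 0 ≤ X x := fun x => by positivity
  have hS0 : ∀ x, 0 ≤ S x := fun x => by positivity
  have hℓ0 : 0 ≤ ℓ := mul_nonneg (by positivity) (integral_nonneg fun x => norm_nonneg _)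
  have pointwise : ∀ x, φ x * G x ≤ N x + T * M * R * S x + (T * M / R * X x + 3 * ℓ * ‖u x‖) := by
    intro x
    have hu := fun i => abs_coord_le (u x) i
    have hw := fun i => abs_coord_le (w x) i
    have hu' := fun i => (hu i).trans (hMu x)
    have hb' := fun i => (abs_coord_le (b x) i).trans (hMb x)
    have h3 : -(9 * (c * R⁻¹) ^ 2 * ∑ j, w x j ^ 2)
        ≤ φ x * vdiv w x ^ 2 + vdiv w x * ∑ j, pd j φ x * w x j := by
      have h := div_term_ge (ψ := ψ x) (D := vdiv w x)
        (abs_dot_le (a := fun j => w x j) hw fun j => hψd j x)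
      rw [norm_sq_E3_sum, div_eq_mul_inv] at h
      refine h.trans_eq ?_
      simp only [hφpd, Fin.sum_univ_three]
      rw [show φ x = ψ x * ψ x from rfl]
      ring
    have h5 : |lap φ x| ≤ 3 * ((2 * c ^ 2 + 2 * c) / R) := by
      refine (Finset.abs_sum_le_sum_abs _ _).trans
        ((Finset.sum_le_sum fun i _ => hφdd i i x).trans_eq ?_)
      simp
    have h7 := mul_le_mul (abs_dot_le hb' fun i => hφd i x)
      (abs_sum_mul_le (fun j => b x j) (fun j => u x j) fun j => w x j) (abs_nonneg _)
      (by positivity)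
    rw [← abs_mul] at h7
    have key := energy_terms_le hc (inv_pos.2 hR) (inv_le_one_of_one_le₀ hR1.le) hR hMu0 hMb0
      (Finset.sum_nonneg fun j _ => sq_nonneg (u x j))
      (Finset.sum_nonneg fun j _ => sq_nonneg (b x j))
      (Finset.sum_nonneg fun j _ => sq_nonneg (w x j)) (hS0 x)
      (mul_nonneg (hφ0 x) (curl_term_nonneg (fun j => w x j) (curl3 u x))) h3
      (abs_quadratic_le (a := fun j => u x j) fun i j => hφdd i j x) h5
      (abs_dot_le hu' fun i => hφd i x) h7
      (abs_cross_le (a := fun j => w x j) (v := fun j => u x j) fun i => hφd i x)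
      (abs_dot_le hu fun j => hWL j x)
      (abs_convection_le hR hu' fun i j => pd i (W j) x)
      (abs_convection_le hR hb' fun i j => pd i (W j) x)
      (abs_curl_le (a := fun j => w x j) hR fun i j => pd i (W j) x)
    have hXx : X x = ∑ j, u x j ^ 2 + ∑ j, b x j ^ 2 + ∑ j, w x j ^ 2 := by
      simp only [hX, norm_sq_E3_sum]
    rw [hNx, hXx, div_eq_mul_inv (T * M),
      show G x = 1 / 2 * gradSq u x + gradSq b x + gradSq w x from rfl]
    linarith
  have hXc : Continuous X := by
    have h1 := H.smooth_u.continuous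
    have h2 := H.smooth_b.continuous
    have h3 := H.smooth_w.continuous
    fun_prop
  have huc : Continuous fun x => ‖u x‖ := H.smooth_u.continuous.norm
  have hφG : Integrable fun x => φ x * G x :=
    (hφ.integrable_mul hGc).congr (ae_of_all _ fun x => mul_comm _ _)
  have hSi : Integrable S := integrable_finsetSum _ fun i _ => integrable_finsetSum _ fun j _ => by
    simpa only [pow_two] using ((hW j).pd i).integrable_mul ((hW j).pd i).smooth.continuous
  have off : ∀ x ∉ ball3 (2 * R), φ x * G x - N x - T * M * R * S x ≤ 0 := fun x hx => by
    have z1 : φ x = 0 := hφ.zero_of_notMem (by linarith) hx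
    have z2 : ∀ i, pd i φ x = 0 := fun i => (hφ.pd i).zero_of_notMem (by linarith) hx
    have z3 : ∀ i j, pd i (fun y => pd j φ y) x = 0 := fun i j =>
      ((hφ.pd j).pd i).zero_of_notMem (by linarith) hx
    have z4 : lap φ x = 0 := hφ.lap.zero_of_notMem (by linarith) hx
    have z5 : ∀ i j, pd i (W j) x = 0 := fun i j =>
      ((hW j).pd i).zero_of_notMem (by linarith) hx
    have z6 : ∀ j, lap (E j) x = 0 := fun j => (hE j).lap.zero_of_notMem (by linarith) hx
    have : N x = 0 := by rw [hNx]; simp [z1, z2, z3, z4, z5, z6]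
    rw [z1, this]
    have : 0 ≤ T * M * R * S x := mul_nonneg (by positivity) (hS0 x)
    linarith
  have hφN : Integrable fun x => φ x * G x - N x := hφG.sub hN.1
  have key : ∫ x, (φ x * G x - N x - T * M * R * S x)
      ≤ ∫ x in ball3 (2 * R), (T * M / R * X x + 3 * ℓ * ‖u x‖) :=
    integral_le_setIntegral (hφN.sub (hSi.const_mul (T * M * R)))
      (show Continuous fun x => T * M / R * X x + 3 * ℓ * ‖u x‖ by fun_prop)
      (fun x _ => by linarith [pointwise x]) off
  have i1 : ∫ x in ball3 (2 * R), (T * M / R * X x + 3 * ℓ * ‖u x‖)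
      = T * M / R * (∫ x in ball3 (2 * R), X x) + 3 * ℓ * ∫ x in ball3 (2 * R), ‖u x‖ := by
    rw [integral_add ((integrableOn_ball3 hXc _).const_mul _)
      ((integrableOn_ball3 huc _).const_mul _), integral_const_mul, integral_const_mul]
  rw [integral_sub hφN (hSi.const_mul _), integral_sub hφG hN.1, hN.2,
    integral_const_mul, i1] at key
  set I := ∫ x in ball3 (2 * R), ‖u x‖ with hI
  set U := ∫ x in ball3 (2 * R), ‖u x‖ ^ 2 with hU
  set Y := ∫ x in ball3 (2 * R), X x with hY
  have hUY : U ≤ Y := integral_mono (integrableOn_ball3 (huc.pow 2) _) (integrableOn_ball3 hXc _)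
    fun x => by
      simp only [hX]
      nlinarith [sq_nonneg ‖b x‖, sq_nonneg ‖w x‖]
  have hU0 : 0 ≤ U := integral_nonneg fun x => sq_nonneg _
  have hIU : I ^ 2 ≤ (2 * R) ^ 3 * unitVol * U := sq_setIntegral_le (by positivity) huc
  have lower : ∫ x in ball3 R, (gradSq u x + gradSq b x + gradSq w x)
      ≤ 2 * ∫ x, φ x * G x := by
    rw [← integral_const_mul]
    refine le_trans ?_ (setIntegral_le_integral (s := ball3 R) (hφG.const_mul 2)
      (ae_of_all _ fun x => mul_nonneg zero_le_two (mul_nonneg (hφ0 x) (hG0 x))))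
    refine setIntegral_mono_on (integrableOn_ball3 (((continuous_gradSq H.smooth_u).add
      (continuous_gradSq H.smooth_b)).add (continuous_gradSq H.smooth_w)) _)
      (hφG.const_mul 2).integrableOn measurableSet_ball fun x hx => ?_
    rw [show φ x = ψ x * ψ x from rfl, hψR x hx]
    have h2 := gradSq_nonneg b x
    have h3 := gradSq_nonneg w x
    simp only [hG]
    linarith
  refine lower.trans ?_
  have hM1 : 1 ≤ M := by linarith
  have b1 : T * M * R * ∫ x, S x ≤ T * K * (M / R * Y) := by
    calc T * M * R * ∫ x, S x ≤ T * M * R * (K / R ^ 2 * Y) :=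
          mul_le_mul_of_nonneg_left
            (hWS.trans (mul_le_mul_of_nonneg_left hUY (by positivity))) (by positivity)
      _ = _ := by field_simp
  have b2 : 3 * ℓ * I ≤ 24 * K * unitVol * (M / R * Y) := by
    have hRR : K / R ^ 5 * ((2 * R) ^ 3 * unitVol * Y) = 8 * K * unitVol * (1 / R ^ 2 * Y) := by
      field_simp
      ring
    have h1 : K / R ^ 5 * I ^ 2 ≤ 8 * K * unitVol * (1 / R ^ 2 * Y) := by
      rw [← hRR]
      exact mul_le_mul_of_nonneg_left
        (hIU.trans (mul_le_mul_of_nonneg_left hUY (by positivity))) (by positivity)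
    have h2 : 1 / R ^ 2 ≤ M / R := div_le_div₀ (by linarith) hM1 hR (by nlinarith)
    have h3 : 8 * K * unitVol * (1 / R ^ 2 * Y) ≤ 8 * K * unitVol * (M / R * Y) :=
      mul_le_mul_of_nonneg_left (mul_le_mul_of_nonneg_right h2 (hU0.trans hUY)) (by positivity)
    rw [hℓ]
    linarith
  have e : 2 * (T + T * K + 24 * K * unitVol) * M / R * Y
      = 2 * (T * (M / R * Y) + T * K * (M / R * Y) + 24 * K * unitVol * (M / R * Y)) := by ring
  rw [e]
  have e2 : T * M / R * Y = T * (M / R * Y) := by ring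
  linarith

end main

section lpnorm

variable {v : E3 → E3} {M p : ℝ}

lemma lpnorm_nonneg (p : ℝ) (v : E3 → E3) (S : Set E3) : 0 ≤ lpnorm p v S :=
  rpow_nonneg (integral_nonneg fun _ => by positivity) _

lemma setIntegral_norm_rpow_le (hv : Continuous v) (hM : ∀ x, ‖v x‖ ≤ M) (hp : 3 / 2 ≤ p)
    {ρ : ℝ} (hρ : 0 < ρ) :
    ∫ x in ball3 ρ, ‖v x‖ ^ (3 / 2 : ℝ)
      ≤ (ρ ^ 3 * unitVol) ^ (1 - 3 / (2 * p)) * lpnorm p v (ball3 ρ) ^ (3 / 2 : ℝ) := by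
  have hp0 : 0 < p := by linarith
  have hI : 0 ≤ ∫ x in ball3 ρ, ‖v x‖ ^ p := integral_nonneg fun _ => by positivity
  have hl : lpnorm p v (ball3 ρ) ^ (3 / 2 : ℝ) = (∫ x in ball3 ρ, ‖v x‖ ^ p) ^ (3 / (2 * p)) := by
    rw [lpnorm, ← rpow_mul hI]
    congr 1
    field_simp
  rw [hl]
  rcases hp.eq_or_lt with rfl | hlt
  · norm_num
  · have hfin : IsFiniteMeasure (volume.restrict (ball3 ρ)) :=
      ⟨by
        rw [Measure.restrict_apply_univ]
        exact measure_ball_lt_top⟩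
    have hs : 1 < 2 * p / 3 := by linarith
    have hpq := Real.HolderConjugate.conjExponent hs
    have hf : Continuous fun x => ‖v x‖ ^ (3 / 2 : ℝ) :=
      hv.norm.rpow_const fun _ => Or.inr (by norm_num)
    have key := integral_mul_le_Lp_mul_Lq_of_nonneg (μ := volume.restrict (ball3 ρ)) hpq
      (f := fun x => ‖v x‖ ^ (3 / 2 : ℝ)) (g := fun _ => 1)
      (ae_of_all _ fun x => by positivity) (ae_of_all _ fun x => zero_le_one)
      (MemLp.of_bound hf.aestronglyMeasurable (M ^ (3 / 2 : ℝ)) (ae_of_all _ fun x => by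
        rw [norm_of_nonneg (by positivity)]
        exact rpow_le_rpow (norm_nonneg _) (hM x) (by norm_num)))
      (memLp_const 1)
    have e : ∀ x, (‖v x‖ ^ (3 / 2 : ℝ)) ^ (2 * p / 3) = ‖v x‖ ^ p := fun x => by
      rw [← rpow_mul (norm_nonneg _)]
      congr 1
      ring
    have hq : 1 / (2 * p / 3).conjExponent = 1 - 3 / (2 * p) := by
      rw [Real.conjExponent]
      have : 2 * p - 3 ≠ 0 := by linarith
      field_simp
    have hc : ∫ _x in ball3 ρ, (1 : ℝ) = ρ ^ 3 * unitVol := by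
      rw [← volume_ball3 hρ]
      simp
    simp only [mul_one, one_rpow, e, hq, hc] at key
    rw [show 1 / (2 * p / 3) = 3 / (2 * p) by field_simp] at key
    rw [mul_comm]
    exact key

lemma setIntegral_norm_sq_le (hv : Continuous v) (hM : ∀ x, ‖v x‖ ≤ M) (hp : 3 / 2 ≤ p)
    {ρ : ℝ} (hρ : 0 < ρ) :
    ∫ x in ball3 ρ, ‖v x‖ ^ 2
      ≤ √M * ((ρ ^ 3 * unitVol) ^ (1 - 3 / (2 * p)) * lpnorm p v (ball3 ρ) ^ (3 / 2 : ℝ)) := by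
  refine le_trans ?_ (mul_le_mul_of_nonneg_left (setIntegral_norm_rpow_le hv hM hp hρ)
    (sqrt_nonneg M))
  have hf : Continuous fun x => ‖v x‖ ^ (3 / 2 : ℝ) :=
    hv.norm.rpow_const fun _ => Or.inr (by norm_num)
  rw [← integral_const_mul]
  refine integral_mono (integrableOn_ball3 (hv.norm.pow 2) _)
    ((integrableOn_ball3 hf _).const_mul _) fun x => ?_
  have e : ‖v x‖ ^ 2 = √‖v x‖ * ‖v x‖ ^ (3 / 2 : ℝ) := by
    rw [sqrt_eq_rpow, ← rpow_add_of_nonneg (norm_nonneg _) (by norm_num) (by norm_num)]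
    norm_num
  simp only [e]
  exact mul_le_mul_of_nonneg_right (sqrt_le_sqrt (hM x)) (by positivity)

end lpnorm

/-- Dirichlet integral estimate for bounded solutions, `p ∈ [3/2, 9/4)`. -/
theorem dirichlet_estimate_bounded_mid_p
    (p : ℝ) (hp1 : 3 / 2 ≤ p) (hp2 : p < 9 / 4)
    (Mu Mb Mw : ℝ) :
    ∃ C : ℝ, 0 < C ∧
      ∀ u w b : E3 → E3, ∀ P : E3 → ℝ, IsMMPSolution u w b P →
      (∀ x, ‖u x‖ ≤ Mu) → (∀ x, ‖b x‖ ≤ Mb) → (∀ x, ‖w x‖ ≤ Mw) →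
      ∀ R : ℝ, 1 < R →
        (∫ x in ball3 R, (gradSq u x + gradSq b x + gradSq w x)) ≤
          C * (R ^ (1 - 9 / (2 * p)) + R ^ (2 - 9 / (2 * p))) *
            (lpnorm p u (ball3 (2 * R)) + lpnorm p b (ball3 (2 * R))
              + lpnorm p w (ball3 (2 * R))) ^ ((3:ℝ)/2) := by
  obtain ⟨C, hC, H⟩ := exists_dirichlet_le
  have hv := unitVol_pos
  set θ := 1 - 3 / (2 * p) with hθ
  refine ⟨C * (1 + |Mu| + |Mb|) * ((√Mu + √Mb + √Mw) * (8 * unitVol) ^ θ) + 1, by positivity, ?_⟩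
  intro u w b P hs hu hb hw R hR1
  have hR : 0 < R := by linarith
  have hp0 : 0 < p := by linarith
  have h2R : 0 < 2 * R := by positivity
  have hMu : Mu ≤ |Mu| := le_abs_self Mu
  have hMb : Mb ≤ |Mb| := le_abs_self Mb
  refine (H u w b P |Mu| |Mb| R hs (fun x => (hu x).trans hMu) (fun x => (hb x).trans hMb)
    hR1).trans ?_
  have cu := hs.smooth_u.continuous
  have cb := hs.smooth_b.continuous
  have cw := hs.smooth_w.continuous
  have iu := setIntegral_norm_sq_le cu hu hp1 h2R
  have ib := setIntegral_norm_sq_le cb hb hp1 h2R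
  have iw := setIntegral_norm_sq_le cw hw hp1 h2R
  have au := lpnorm_nonneg p u (ball3 (2 * R))
  have ab := lpnorm_nonneg p b (ball3 (2 * R))
  have aw := lpnorm_nonneg p w (ball3 (2 * R))
  set A := lpnorm p u (ball3 (2 * R))
  set B := lpnorm p b (ball3 (2 * R))
  set D := lpnorm p w (ball3 (2 * R))
  set V := ((2 * R) ^ 3 * unitVol) ^ θ with hV
  have hV0 : 0 ≤ V := by positivity
  have hVe : V = (8 * unitVol) ^ θ * (R * R ^ (2 - 9 / (2 * p))) := by
    rw [hV, show (2 * R) ^ 3 * unitVol = 8 * unitVol * R ^ (3 : ℝ) by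
      rw [show (3 : ℝ) = ((3 : ℕ) : ℝ) by norm_num, rpow_natCast]
      ring, mul_rpow (by positivity) (by positivity), ← rpow_mul hR.le]
    congr 1
    rw [show R * R ^ (2 - 9 / (2 * p)) = R ^ (1 + (2 - 9 / (2 * p))) by
      rw [rpow_add hR, rpow_one]]
    congr 1
    rw [hθ]
    ring
  set Z := (A + B + D) ^ (3 / 2 : ℝ) with hZ
  have hZ0 : 0 ≤ Z := by positivity
  have hz : ∀ a m : ℝ, 0 ≤ a → a ≤ A + B + D → √m * (V * a ^ (3 / 2 : ℝ)) ≤ √m * (V * Z) :=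
    fun a m h0 h1 => by
      rw [hZ]
      gcongr
  have hX : ∫ x in ball3 (2 * R), (‖u x‖ ^ 2 + ‖b x‖ ^ 2 + ‖w x‖ ^ 2)
      ≤ (√Mu + √Mb + √Mw) * (V * Z) := by
    have ju : IntegrableOn (fun x => ‖u x‖ ^ 2) (ball3 (2 * R)) :=
      integrableOn_ball3 (cu.norm.pow 2) (2 * R)
    have jb : IntegrableOn (fun x => ‖b x‖ ^ 2) (ball3 (2 * R)) :=
      integrableOn_ball3 (cb.norm.pow 2) (2 * R)
    have jw : IntegrableOn (fun x => ‖w x‖ ^ 2) (ball3 (2 * R)) :=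
      integrableOn_ball3 (cw.norm.pow 2) (2 * R)
    have e : ∫ x in ball3 (2 * R), (‖u x‖ ^ 2 + ‖b x‖ ^ 2 + ‖w x‖ ^ 2)
        = (∫ x in ball3 (2 * R), ‖u x‖ ^ 2) + (∫ x in ball3 (2 * R), ‖b x‖ ^ 2)
          + ∫ x in ball3 (2 * R), ‖w x‖ ^ 2 := by
      have jub : IntegrableOn (fun x => ‖u x‖ ^ 2 + ‖b x‖ ^ 2) (ball3 (2 * R)) := ju.add jb
      rw [integral_add jub jw, integral_add ju jb]
    have zu := hz A Mu au (by linarith)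
    have zb := hz B Mb ab (by linarith)
    have zw := hz D Mw aw (by linarith)
    rw [e]
    linarith
  have hr1 : 0 ≤ R ^ (1 - 9 / (2 * p)) := by positivity
  have hr2 : 0 ≤ R ^ (2 - 9 / (2 * p)) := by positivity
  set m := C * (1 + |Mu| + |Mb|) with hm
  have hm0 : 0 ≤ m := by positivity
  set k := m * ((√Mu + √Mb + √Mw) * (8 * unitVol) ^ θ) with hk
  have hk0 : 0 ≤ k := by positivity
  calc m / R * ∫ x in ball3 (2 * R), (‖u x‖ ^ 2 + ‖b x‖ ^ 2 + ‖w x‖ ^ 2)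
      ≤ m / R * ((√Mu + √Mb + √Mw) * (V * Z)) := mul_le_mul_of_nonneg_left hX (by positivity)
    _ = k * R ^ (2 - 9 / (2 * p)) * Z := by
      rw [hVe, hk]
      field_simp
    _ ≤ _ := by
      refine mul_le_mul_of_nonneg_right ?_ hZ0
      exact mul_le_mul (by linarith) (by linarith) hr2 (by linarith)
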